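/- arXiv:2103.14809 — 5 statements merged into one kernel-verified Lean document; each statement's English description precedes it below -/
import Mathlib

section
/- Let R be an NP-ring and M an R-module. The following are equivalent: (1) M is φ-flat; (2) Hom_R(M,E) is nonnil-injective for every injective R-module E; (3) Hom_R(M,E) is nonnil-FP-injective for every injective R-module E; (4) Hom_R(M,E) is nonnil-injective for every injective cogenerator E; (5) Hom_R(M,E) is nonnil-FP-injective for every injective cogenerator E. -/
open CategoryTheory

universe u

/-- A commutative ring is a `φ`-ring if its nilradical is a divided prime ideal. -/
def IsPhiRing (R : Type u) [CommRing R] : Prop :=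
  (nilradical R).IsPrime ∧ ∀ x : R, x ∉ nilradical R → nilradical R ≤ Ideal.span {x}

/-- A ring is nonnil-coherent if every finitely generated nonnil ideal is
finitely presented as a module. -/
def IsNonnilCoherent (R : Type u) [CommRing R] : Prop :=
  ∀ I : Ideal R, I.FG → ¬ I ≤ nilradical R → Module.FinitePresentation R I

/-- A module is φ-torsion if every element is annihilated by a nonnil ideal. -/
def IsPhiTorsion (R : Type u) [CommRing R] (T : Type u) [AddCommGroup T] [Module R T] : Prop :=
  ∀ t : T, ∃ I : Ideal R, ¬ I ≤ nilradical R ∧ ∀ a ∈ I, a • t = 0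

/-- A module `M` is φ-flat if `Tor₁ᴿ(T, M) = 0` for every φ-torsion module `T`. -/
def IsPhiFlat (R : Type u) [CommRing R] (M : Type u) [AddCommGroup M] [Module R M] : Prop :=
  ∀ (T : Type u) [AddCommGroup T] [Module R T], IsPhiTorsion R T →
    Subsingleton (((Tor (ModuleCat.{u} R) 1).obj (ModuleCat.of R T)).obj (ModuleCat.of R M))

/-- A module `M` is nonnil-injective if `Ext¹ᴿ(T, M) = 0` for every φ-torsion module `T`. -/
def IsNonnilInjective (R : Type u) [CommRing R] (M : Type u) [AddCommGroup M] [Module R M] :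
    Prop :=
  ∀ (T : Type u) [AddCommGroup T] [Module R T], IsPhiTorsion R T →
    Subsingleton (((Ext R (ModuleCat.{u} R) 1).obj (Opposite.op (ModuleCat.of R T))).obj
      (ModuleCat.of R M))

/-- A module `M` is nonnil-FP-injective if `Ext¹ᴿ(T, M) = 0` for every finitely
presented φ-torsion module `T`. -/
def IsNonnilFPInjective (R : Type u) [CommRing R] (M : Type u) [AddCommGroup M] [Module R M] :
    Prop :=
  ∀ (T : Type u) [AddCommGroup T] [Module R T], Module.FinitePresentation R T →
    IsPhiTorsion R T →
    Subsingleton (((Ext R (ModuleCat.{u} R) 1).obj (Opposite.op (ModuleCat.of R T))).obj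
      (ModuleCat.of R M))

/-- An injective cogenerator of the category of `R`-modules. -/
def IsInjectiveCogenerator (R : Type u) [CommRing R] (E : Type u) [AddCommGroup E]
    [Module R E] : Prop :=
  Module.Injective R E ∧
    ∀ (M : Type u) [AddCommGroup M] [Module R M], (∀ f : M →ₗ[R] E, f = 0) → Subsingleton M


open TensorProduct in
theorem tor_balance_aux {R : Type u} [CommRing R] {K F T L P M : Type u}
    [AddCommGroup K] [Module R K] [AddCommGroup F] [Module R F] [AddCommGroup T] [Module R T]
    [AddCommGroup L] [Module R L] [AddCommGroup P] [Module R P] [AddCommGroup M] [Module R M]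
    (i : K →ₗ[R] F) (p : F →ₗ[R] T) (j : L →ₗ[R] P) (q : P →ₗ[R] M)
    (hip : Function.Exact i p) (hp : Function.Surjective p)
    (hjq : Function.Exact j q) (hq : Function.Surjective q)
    (hj : Function.Injective j) [Module.Flat R F]
    (h : Function.Injective (i.rTensor M)) : Function.Injective (j.lTensor T) := by
  rw [injective_iff_map_eq_zero]
  intro x hx
  obtain ⟨y, rfl⟩ := LinearMap.rTensor_surjective L hp x
  have e1 : p.rTensor P (j.lTensor F y) = 0 := by
    rw [← hx, ← LinearMap.comp_apply, ← LinearMap.comp_apply,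
      LinearMap.rTensor_comp_lTensor, LinearMap.lTensor_comp_rTensor]
  obtain ⟨z, hz⟩ := (rTensor_exact P hip hp _).1 e1
  have e2 : q.lTensor K z = 0 := by
    apply h
    rw [map_zero, ← LinearMap.comp_apply, LinearMap.rTensor_comp_lTensor,
      ← LinearMap.lTensor_comp_rTensor, LinearMap.comp_apply, hz]
    exact (lTensor_exact F hjq hq _).2 ⟨y, rfl⟩
  obtain ⟨w, rfl⟩ := (lTensor_exact K hjq hq _).1 e2
  have e3 : i.rTensor L w = y := by
    apply Module.Flat.lTensor_preserves_injective_linearMap (M := F) j hj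
    rw [← hz, ← LinearMap.comp_apply, ← LinearMap.comp_apply,
      LinearMap.rTensor_comp_lTensor, LinearMap.lTensor_comp_rTensor]
  exact (rTensor_exact L hip hp _).2 ⟨w, e3⟩

theorem tor_balance {R : Type u} [CommRing R] {K F T L P M : Type u}
    [AddCommGroup K] [Module R K] [AddCommGroup F] [Module R F] [AddCommGroup T] [Module R T]
    [AddCommGroup L] [Module R L] [AddCommGroup P] [Module R P] [AddCommGroup M] [Module R M]
    (i : K →ₗ[R] F) (p : F →ₗ[R] T) (j : L →ₗ[R] P) (q : P →ₗ[R] M)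
    (hip : Function.Exact i p) (hp : Function.Surjective p) (hi : Function.Injective i)
    (hjq : Function.Exact j q) (hq : Function.Surjective q)
    (hj : Function.Injective j) [Module.Flat R F] [Module.Flat R P] :
    Function.Injective (j.lTensor T) ↔ Function.Injective (i.rTensor M) := by
  refine ⟨fun h => ?_, tor_balance_aux i p j q hip hp hjq hq hj⟩
  rw [← LinearMap.lTensor_inj_iff_rTensor_inj]
  rw [LinearMap.lTensor_inj_iff_rTensor_inj] at h
  exact tor_balance_aux j q i p hjq hq hip hp hi h

theorem ext_lin {R : Type u} [CommRing R] {A B C N : Type u} [AddCommGroup A] [Module R A]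
    [AddCommGroup B] [Module R B] [AddCommGroup C] [Module R C] [AddCommGroup N] [Module R N]
    (d2 : A →ₗ[R] B) (d1 : B →ₗ[R] C) (hd : Function.Exact d2 d1) :
    (∀ g : B →ₗ[R] N, g ∘ₗ d2 = 0 → ∃ h : C →ₗ[R] N, h ∘ₗ d1 = g) ↔
    ∀ g : LinearMap.range d1 →ₗ[R] N, ∃ h : C →ₗ[R] N,
      h ∘ₗ (LinearMap.range d1).subtype = g := by
  constructor
  · intro H g
    obtain ⟨h, hh⟩ := H (g ∘ₗ d1.rangeRestrict) (by
      ext x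
      have : d1.rangeRestrict (d2 x) = 0 := Subtype.ext (hd.apply_apply_eq_zero x)
      simp [this])
    refine ⟨h, ?_⟩
    ext ⟨_, x, rfl⟩
    exact LinearMap.congr_fun hh x
  · intro H g hg
    obtain ⟨h, hh⟩ := H ((LinearMap.ker d1).liftQ g (by
      intro x hx
      obtain ⟨y, rfl⟩ := (hd x).1 hx
      exact LinearMap.congr_fun hg y) ∘ₗ d1.quotKerEquivRange.symm.toLinearMap)
    refine ⟨h, ?_⟩
    ext x
    have := LinearMap.congr_fun hh (d1.quotKerEquivRange (Submodule.Quotient.mk x))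
    simpa using this

theorem tor_lin {R : Type u} [CommRing R] {A B C T : Type u} [AddCommGroup A] [Module R A]
    [AddCommGroup B] [Module R B] [AddCommGroup C] [Module R C] [AddCommGroup T] [Module R T]
    (d2 : A →ₗ[R] B) (d1 : B →ₗ[R] C) (hd : Function.Exact d2 d1) :
    Function.Exact (d2.lTensor T) (d1.lTensor T) ↔
    Function.Injective ((LinearMap.range d1).subtype.lTensor T) := by
  have hr : Function.Exact d2 d1.rangeRestrict := by
    intro x
    rw [← hd x, Subtype.ext_iff]
    rfl
  have hs := d1.surjective_rangeRestrict
  have hE := lTensor_exact T hr hs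
  have hc : ∀ y, d1.lTensor T y =
      (LinearMap.range d1).subtype.lTensor T (d1.rangeRestrict.lTensor T y) := by
    intro y
    rw [← LinearMap.comp_apply, ← LinearMap.lTensor_comp]
    rfl
  constructor
  · intro H
    rw [injective_iff_map_eq_zero]
    intro z hz
    obtain ⟨y, rfl⟩ := LinearMap.lTensor_surjective T hs z
    rw [← hc] at hz
    exact (hE y).2 ((H y).1 hz)
  · intro H y
    rw [← hE y, hc, map_eq_zero_iff _ H]

theorem res_data {R : Type u} [CommRing R] {T : Type u} [AddCommGroup T] [Module R T]
    (P : ProjectiveResolution (ModuleCat.of R T)) :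
    ∃ p : P.complex.X 0 →ₗ[R] T, Function.Surjective p ∧
      Function.Exact (LinearMap.range (P.complex.d 1 0).hom).subtype p := by
  let q : P.complex.X 0 ⟶ ModuleCat.of R T := P.π.f 0
  have hq : Function.Surjective q := (ModuleCat.epi_iff_surjective q).1
    (inferInstanceAs (Epi (P.π.f 0)))
  refine ⟨q.hom, hq, ?_⟩
  have h0 : P.complex.d 1 0 ≫ q = 0 := P.complex_d_comp_π_f_zero
  have h : (ShortComplex.mk (P.complex.d 1 0) q h0).Exact :=
    ShortComplex.exact_of_g_is_cokernel _ P.isColimitCokernelCofork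
  rw [ShortComplex.ShortExact.moduleCat_exact_iff_function_exact] at h
  intro x
  rw [h x]
  simp

theorem res_exact {R : Type u} [CommRing R] {T : Type u} [AddCommGroup T] [Module R T]
    (P : ProjectiveResolution (ModuleCat.of R T)) :
    Function.Exact (P.complex.d 2 1).hom (P.complex.d 1 0).hom :=
  (ShortComplex.ShortExact.moduleCat_exact_iff_function_exact _).1 (P.exact_succ 0)

theorem ext_crit {R : Type u} [CommRing R] (T N : Type u) [AddCommGroup T] [Module R T]
    [AddCommGroup N] [Module R N]
    (P : ProjectiveResolution (ModuleCat.of R T)) :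
    Subsingleton (((Ext R (ModuleCat.{u} R) 1).obj (Opposite.op (ModuleCat.of R T))).obj
      (ModuleCat.of R N)) ↔
    ∀ g : LinearMap.range (P.complex.d 1 0).hom →ₗ[R] N, ∃ h : P.complex.X 0 →ₗ[R] N,
      h ∘ₗ (LinearMap.range (P.complex.d 1 0).hom).subtype = g := by
  rw [← ext_lin _ _ (res_exact P), ← ModuleCat.isZero_iff_subsingleton,
    (P.isoExt 1 (ModuleCat.of R N)).isZero_iff,
    ← HomologicalComplex.exactAt_iff_isZero_homology,
    HomologicalComplex.exactAt_iff' _ 0 1 2 (by simp) (by simp),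
    ShortComplex.moduleCat_exact_iff]
  constructor
  · intro H g hg
    obtain ⟨h, hh⟩ := H (ModuleCat.ofHom g) (by
      refine ModuleCat.hom_ext ?_
      exact hg)
    exact ⟨ModuleCat.Hom.hom h, congrArg ModuleCat.Hom.hom hh⟩
  · intro H g hg
    obtain ⟨h, hh⟩ := H (ModuleCat.Hom.hom g) (congrArg ModuleCat.Hom.hom hg)
    exact ⟨ModuleCat.ofHom h, ModuleCat.hom_ext hh⟩

theorem tor_crit {R : Type u} [CommRing R] (T M : Type u) [AddCommGroup T] [Module R T]
    [AddCommGroup M] [Module R M]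
    (P : ProjectiveResolution (ModuleCat.of R M)) :
    Subsingleton (((Tor (ModuleCat.{u} R) 1).obj (ModuleCat.of R T)).obj (ModuleCat.of R M)) ↔
    Function.Injective ((LinearMap.range (P.complex.d 1 0).hom).subtype.lTensor T) := by
  rw [← tor_lin _ _ (res_exact P), ← ModuleCat.isZero_iff_subsingleton, Tor_obj,
    (P.isoLeftDerivedObj _ 1).isZero_iff]
  refine (HomologicalComplex.exactAt_iff_isZero_homology _ _).symm.trans ?_
  rw [HomologicalComplex.exactAt_iff' _ 2 1 0 (by simp) (by simp),
    ShortComplex.ShortExact.moduleCat_exact_iff_function_exact]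
  rfl

open TensorProduct in
theorem tor_fp {R : Type u} [CommRing R] (hNP : (nilradical R).IsPrime)
    {L P : Type u} [AddCommGroup L] [Module R L] [AddCommGroup P] [Module R P]
    [Module.Flat R P] (j : L →ₗ[R] P)
    (h : ∀ (T : Type u) [AddCommGroup T] [Module R T], Module.FinitePresentation R T →
      IsPhiTorsion R T → Function.Injective (j.lTensor T))
    (T : Type u) [AddCommGroup T] [Module R T] (hT : IsPhiTorsion R T) :
    Function.Injective (j.lTensor T) := by
  rw [injective_iff_map_eq_zero]
  intro x hx
  obtain ⟨n, t, l, rfl⟩ : ∃ (n : ℕ) (t : Fin n → T) (l : Fin n → L),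
      x = ∑ k, t k ⊗ₜ[R] l k := by
    exact TensorProduct.exists_sum_tmul_eq x
  have hx' : ∑ k, t k ⊗ₜ[R] j (l k) = 0 := by simpa using hx
  obtain ⟨κ, a, y, h1, h2⟩ :=
    TensorProduct.vanishesTrivially_of_sum_tmul_eq_zero_of_rTensor_injective R
      (Module.Flat.rTensor_preserves_injective_linearMap _ (Submodule.subtype_injective _)) hx'
  have hc : ∀ k, ∃ c : R, c ∉ nilradical R ∧ c • t k = 0 := by
    intro k
    obtain ⟨I, hI, hI'⟩ := hT (t k)
    obtain ⟨c, hc, hc'⟩ := SetLike.not_le_iff_exists.1 hI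
    exact ⟨c, hc', hI' c hc⟩
  choose c hc hct using hc
  let G : Set (Fin n → R) := Set.range (fun m : Fin κ => fun k => a k m) ∪
    Set.range (fun k => Pi.single k (c k))
  let N : Submodule R (Fin n → R) := Submodule.span R G
  have hGf : G.Finite := (Set.finite_range _).union (Set.finite_range _)
  have hFP : Module.FinitePresentation R ((Fin n → R) ⧸ N) := by
    apply Module.finitePresentation_of_surjective N.mkQ N.mkQ_surjective
    rw [Submodule.ker_mkQ]
    exact Submodule.fg_span hGf
  have htor : IsPhiTorsion R ((Fin n → R) ⧸ N) := by
    intro v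
    obtain ⟨v, rfl⟩ := N.mkQ_surjective v
    refine ⟨Ideal.span {∏ k, c k}, ?_, ?_⟩
    · rw [Ideal.span_singleton_le_iff_mem, hNP.prod_mem_iff]
      rintro ⟨k, _, hk⟩
      exact hc k hk
    · intro b hb
      obtain ⟨b, rfl⟩ := Ideal.mem_span_singleton'.1 hb
      rw [← map_smul, ← LinearMap.mem_ker, Submodule.ker_mkQ, mul_smul]
      apply N.smul_mem
      rw [pi_eq_sum_univ' v, Finset.smul_sum]
      refine N.sum_mem fun k _ => ?_
      rw [smul_comm]
      refine N.smul_mem _ ?_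
      rw [← Finset.prod_erase_mul _ _ (Finset.mem_univ k), mul_smul]
      refine N.smul_mem _ ?_
      refine Submodule.subset_span (Or.inr ⟨k, ?_⟩)
      ext k'
      by_cases hk : k = k' <;> simp [hk, eq_comm]
  let f : ((Fin n → R) ⧸ N) →ₗ[R] T := N.liftQ (Fintype.linearCombination R t) (by
    rw [Submodule.span_le]
    rintro _ (⟨m, rfl⟩ | ⟨k, rfl⟩)
    · simpa [Fintype.linearCombination_apply] using h2 m
    · simpa [Fintype.linearCombination_apply_single] using hct k)
  let e : Fin n → ((Fin n → R) ⧸ N) := fun k => N.mkQ (Pi.single k 1)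
  have hfe : ∀ k, f (e k) = t k := by
    intro k
    simp [f, e, Fintype.linearCombination_apply_single]
  have hz : ∑ k, e k ⊗ₜ[R] l k = 0 := by
    apply h _ hFP htor
    rw [map_zero, map_sum]
    simp only [LinearMap.lTensor_tmul]
    apply TensorProduct.sum_tmul_eq_zero_of_vanishesTrivially
    refine ⟨κ, a, y, h1, fun m => ?_⟩
    simp only [e, ← map_smul, ← map_sum]
    rw [← LinearMap.mem_ker, Submodule.ker_mkQ]
    refine Submodule.subset_span (Or.inl ⟨m, ?_⟩)
    ext k'
    simp [Finset.sum_apply, Pi.single_apply]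
  have := congrArg (f.rTensor L) hz
  simpa [hfe] using this

open TensorProduct in
theorem charInj (R : Type u) [CommRing R] : IsInjectiveCogenerator R (CharacterModule R) := by
  refine ⟨Module.Flat.iff_characterModule_injective.1 inferInstance, ?_⟩
  intro M _ _ h
  refine subsingleton_of_forall_eq 0 fun m => ?_
  apply CharacterModule.eq_zero_of_character_apply
  intro c
  let f : M →ₗ[R] CharacterModule R :=
    CharacterModule.curry (CharacterModule.congr (TensorProduct.rid R M).symm c)
  have := DFunLike.congr_fun (LinearMap.congr_fun (h f) m) (1 : R)
  have h2 : f m 1 = c (TensorProduct.rid R M (m ⊗ₜ[R] 1)) := rfl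
  rw [TensorProduct.rid_tmul, one_smul] at h2
  rw [← h2]
  exact this

instance flat_of_res {R : Type u} [CommRing R] {X : ModuleCat.{u} R}
    (P : ProjectiveResolution X) (n : ℕ) : Module.Flat R (P.complex.X n) := by
  have : Module.Projective R (P.complex.X n) :=
    (IsProjective.iff_projective _).2 (P.projective n)
  infer_instance

open TensorProduct in
theorem main_fwd {R : Type u} [CommRing R] {M : Type u} [AddCommGroup M] [Module R M]
    (h : IsPhiFlat R M) (E : Type u) [AddCommGroup E] [Module R E] (hE : Module.Injective R E) :
    IsNonnilInjective R (M →ₗ[R] E) := by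
  intro T _ _ hT
  have h1 := h T hT
  let P := projectiveResolution (ModuleCat.of R T)
  let Q := projectiveResolution (ModuleCat.of R M)
  obtain ⟨p, hp, hp'⟩ := res_data P
  obtain ⟨q, hq, hq'⟩ := res_data Q
  rw [tor_crit T M Q, tor_balance _ p _ q hp' hp (Submodule.subtype_injective _) hq' hq
    (Submodule.subtype_injective _)] at h1
  rw [ext_crit T _ P]
  intro g
  obtain ⟨k, hk⟩ := hE.out _ h1 (TensorProduct.lift g)
  refine ⟨TensorProduct.curry k, ?_⟩
  ext x m
  simpa using hk (x ⊗ₜ m)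

theorem main_bwd {R : Type u} [CommRing R] (hNP : (nilradical R).IsPrime)
    {M : Type u} [AddCommGroup M] [Module R M]
    (h : IsNonnilFPInjective R (M →ₗ[R] CharacterModule R)) : IsPhiFlat R M := by
  intro T _ _ hT
  let Q := projectiveResolution (ModuleCat.of R M)
  obtain ⟨q, hq, hq'⟩ := res_data Q
  rw [tor_crit T M Q]
  refine tor_fp hNP _ ?_ T hT
  intro T _ _ hFP hT
  let P := projectiveResolution (ModuleCat.of R T)
  obtain ⟨p, hp, hp'⟩ := res_data P
  rw [tor_balance _ p _ q hp' hp (Submodule.subtype_injective _) hq' hq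
    (Submodule.subtype_injective _), rTensor_injective_iff_lcomp_surjective]
  have h1 := h T hFP hT
  rw [ext_crit T _ P] at h1
  let e : (M →ₗ[R] CharacterModule R) ≃ₗ[R] CharacterModule M :=
    CharacterModule.homEquiv ≪≫ₗ CharacterModule.congr (TensorProduct.rid R M)
  intro g
  obtain ⟨k, hk⟩ := h1 (e.symm.toLinearMap ∘ₗ g)
  refine ⟨e.toLinearMap ∘ₗ k, ?_⟩
  ext1 x
  have := LinearMap.congr_fun hk x
  simp only [LinearMap.comp_apply] at this
  simp [LinearMap.lcomp_apply']
  simpa using congrArg e this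

/-- For an NP-ring `R` and an `R`-module `M`, the following are
equivalent: (1) `M` is φ-flat; (2) `Hom_R(M,E)` is nonnil-injective for every injective
`E`; (3) `Hom_R(M,E)` is nonnil-FP-injective for every injective `E`; (4) `Hom_R(M,E)`
is nonnil-injective for every injective cogenerator `E`; (5) `Hom_R(M,E)` is
nonnil-FP-injective for every injective cogenerator `E`. -/
theorem phiFlat_iff_hom_nonnilInjective (R : Type u) [CommRing R]
    (hNP : (nilradical R).IsPrime) (M : Type u) [AddCommGroup M] [Module R M] :
    (IsPhiFlat R M ↔
      ∀ (E : Type u) [AddCommGroup E] [Module R E], Module.Injective R E →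
        IsNonnilInjective R (M →ₗ[R] E)) ∧
    (IsPhiFlat R M ↔
      ∀ (E : Type u) [AddCommGroup E] [Module R E], Module.Injective R E →
        IsNonnilFPInjective R (M →ₗ[R] E)) ∧
    (IsPhiFlat R M ↔
      ∀ (E : Type u) [AddCommGroup E] [Module R E], IsInjectiveCogenerator R E →
        IsNonnilInjective R (M →ₗ[R] E)) ∧
    (IsPhiFlat R M ↔
      ∀ (E : Type u) [AddCommGroup E] [Module R E], IsInjectiveCogenerator R E →
        IsNonnilFPInjective R (M →ₗ[R] E)) := by
  have a : ∀ N : Type u, ∀ [AddCommGroup N] [Module R N], IsNonnilInjective R N →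
      IsNonnilFPInjective R N := fun N _ _ h T _ _ _ hT => h T hT
  have c := charInj R
  refine ⟨⟨fun h E _ _ hE => main_fwd h E hE, fun h => main_bwd hNP (a _ (h _ c.1))⟩,
    ⟨fun h E _ _ hE => a _ (main_fwd h E hE), fun h => main_bwd hNP (h _ c.1)⟩,
    ⟨fun h E _ _ hE => main_fwd h E hE.1, fun h => main_bwd hNP (a _ (h _ c))⟩,
    ⟨fun h E _ _ hE => a _ (main_fwd h E hE.1), fun h => main_bwd hNP (h _ c)⟩⟩
end

section
/- Let R be a φ-ring. Then R is nonnil-coherent if and only if every pure quotient of a nonnil-FP-injective R-module is nonnil-FP-injective; that is, if and only if for every nonnil-FP-injective R-module M and every pure submodule N of M, the quotient M/N is nonnil-FP-injective. -/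
open CategoryTheory

universe u

/-- A submodule `N ≤ M` is pure if `Q ⊗ N → Q ⊗ M` is injective for every module `Q`. -/
def Submodule.IsPure (R : Type u) [CommRing R] {M : Type u} [AddCommGroup M] [Module R M]
    (N : Submodule R M) : Prop :=
  ∀ (Q : Type u) [AddCommGroup Q] [Module R Q],
    Function.Injective (LinearMap.lTensor Q N.subtype)

theorem ext_iff_res (R : Type u) [CommRing R] (T M : ModuleCat.{u} R) (P : ProjectiveResolution T) :
    Subsingleton (((Ext R (ModuleCat.{u} R) 1).obj (Opposite.op T)).obj M) ↔
    ∀ g : P.complex.X 1 ⟶ M, P.complex.d 2 1 ≫ g = 0 → ∃ h : P.complex.X 0 ⟶ M,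
      P.complex.d 1 0 ≫ h = g := by
  rw [← ModuleCat.isZero_iff_subsingleton, (P.isoExt (R := R) 1 M).isZero_iff,
    ← HomologicalComplex.exactAt_iff_isZero_homology,
    HomologicalComplex.exactAt_iff' _ 0 1 2 (by simp) (by simp), ShortComplex.moduleCat_exact_iff]
  rfl

def ExtProp {R : Type u} [CommRing R] {F T : Type u} [AddCommGroup F] [Module R F]
    [AddCommGroup T] [Module R T] (f : F →ₗ[R] T) (M : Type u) [AddCommGroup M] [Module R M] : Prop :=
  ∀ g : LinearMap.ker f →ₗ[R] M, ∃ h : F →ₗ[R] M, ∀ k : LinearMap.ker f, h k = g k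

theorem extProp_trans {R : Type u} [CommRing R] {F G T : Type u} [AddCommGroup F] [Module R F]
    [AddCommGroup G] [Module R G]
    [AddCommGroup T] [Module R T] (f : F →ₗ[R] T) (f' : G →ₗ[R] T)
    (hf : Function.Surjective f) (hf' : Function.Surjective f') [Module.Projective R F]
    [Module.Projective R G]
    (M : Type u) [AddCommGroup M] [Module R M] (H : ExtProp f M) : ExtProp f' M := by
  intro g
  obtain ⟨σ, hσ⟩ := Module.projective_lifting_property f' f hf'
  obtain ⟨τ, hτ⟩ := Module.projective_lifting_property f f' hf
  have hσ' : ∀ x, f' (σ x) = f x := fun x => LinearMap.congr_fun hσ x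
  have hτ' : ∀ x, f (τ x) = f' x := fun x => LinearMap.congr_fun hτ x
  let s : LinearMap.ker f →ₗ[R] LinearMap.ker f' := σ.restrict (fun x hx => by
    simpa [hσ'] using hx)
  obtain ⟨h, hh⟩ := H (g ∘ₗ s)
  let d : G →ₗ[R] LinearMap.ker f' := LinearMap.codRestrict _ (σ ∘ₗ τ - LinearMap.id) (fun x => by
    simp [hσ', hτ'])
  refine ⟨h ∘ₗ τ - g ∘ₗ d, fun k => ?_⟩
  have hk : f (τ k) = 0 := by rw [hτ']; exact k.2
  have := hh ⟨τ k, hk⟩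
  simp only [LinearMap.sub_apply, LinearMap.comp_apply] at this ⊢
  rw [this, ← map_sub]
  congr 1
  ext
  simp [s, d]

theorem subsingleton_ext_iff {R : Type u} [CommRing R] {F T : Type u} [AddCommGroup F] [Module R F]
    [AddCommGroup T] [Module R T] (f : F →ₗ[R] T)
    (hf : Function.Surjective f) [Module.Projective R F]
    (M : Type u) [AddCommGroup M] [Module R M] :
    Subsingleton (((Ext R (ModuleCat.{u} R) 1).obj (Opposite.op (ModuleCat.of R T))).obj
      (ModuleCat.of R M)) ↔ ExtProp f M := by
  let P : ProjectiveResolution (ModuleCat.of R T) := projectiveResolution _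
  let p : P.complex.X 0 →ₗ[R] T := (P.π.f 0).hom
  have hp : Function.Surjective p := (ModuleCat.epi_iff_surjective _).1 inferInstance
  have : Module.Projective R (P.complex.X 0) :=
    (IsProjective.iff_projective _).2 (P.projective 0)
  have key : ExtProp p M ↔ ExtProp f M := ⟨extProp_trans _ _ hp hf M, extProp_trans _ _ hf hp M⟩
  rw [← key, ext_iff_res R _ _ P]
  have e0 := (ShortComplex.moduleCat_exact_iff _).1 P.exact₀
  have e1 := (ShortComplex.moduleCat_exact_iff _).1 (P.exact_succ 0)
  have e0' : ∀ x : P.complex.X 0, p x = 0 → ∃ y, (P.complex.d 1 0).hom y = x := e0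
  have e1' : ∀ x, (P.complex.d 1 0).hom x = 0 → ∃ y, (P.complex.d 2 1).hom y = x := e1
  have z0 : ∀ x, p ((P.complex.d 1 0).hom x) = 0 := fun x =>
    LinearMap.congr_fun (congrArg ModuleCat.Hom.hom P.complex_d_comp_π_f_zero) x
  have z1 : ∀ x, (P.complex.d 1 0).hom ((P.complex.d 2 1).hom x) = 0 := fun x =>
    LinearMap.congr_fun (congrArg ModuleCat.Hom.hom (P.complex.d_comp_d 2 1 0)) x
  let q : P.complex.X 1 →ₗ[R] LinearMap.ker p :=
    LinearMap.codRestrict _ (P.complex.d 1 0).hom z0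
  have hq : Function.Surjective q := by
    rintro ⟨x, hx⟩
    obtain ⟨y, hy⟩ := e0' x hx
    exact ⟨y, Subtype.ext hy⟩
  constructor
  · intro H g
    obtain ⟨h, hh⟩ := H (ModuleCat.ofHom (g ∘ₗ q)) (by
      ext x
      have : q ((P.complex.d 2 1).hom x) = 0 := Subtype.ext (z1 x)
      change g (q ((P.complex.d 2 1).hom x)) = 0
      rw [this, map_zero])
    refine ⟨h.hom, fun k => ?_⟩
    obtain ⟨y, rfl⟩ := hq k
    exact LinearMap.congr_fun (congrArg ModuleCat.Hom.hom hh) y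
  · intro H g hg
    have hker : LinearMap.ker q ≤ LinearMap.ker g.hom := by
      intro x hx
      obtain ⟨y, rfl⟩ := e1' x (congrArg Subtype.val hx)
      exact LinearMap.congr_fun (congrArg ModuleCat.Hom.hom hg) y
    let g' : LinearMap.ker p →ₗ[R] M :=
      (LinearMap.ker q).liftQ g.hom hker ∘ₗ (q.quotKerEquivOfSurjective hq).symm.toLinearMap
    obtain ⟨h, hh⟩ := H g'
    refine ⟨ModuleCat.ofHom h, ?_⟩
    ext x
    have := hh (q x)
    have e : (q.quotKerEquivOfSurjective hq).symm (q x) = (LinearMap.ker q).mkQ x := by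
      rw [LinearEquiv.symm_apply_eq]; rfl
    simp only [g', LinearMap.comp_apply, LinearEquiv.coe_coe, e] at this
    exact this

theorem pure_lift {R : Type u} [CommRing R] {K M : Type u} [AddCommGroup K] [Module R K]
    [AddCommGroup M] [Module R M] (N : Submodule R M) (hN : Submodule.IsPure R N)
    [Module.FinitePresentation R K] (φ : K →ₗ[R] M ⧸ N) :
    ∃ ψ : K →ₗ[R] M, N.mkQ ∘ₗ ψ = φ := by
  obtain ⟨n, m, f, g, hf, hfg⟩ := Module.FinitePresentation.exists_fin' R K
  obtain ⟨ψ, hψ⟩ := Module.projective_lifting_property N.mkQ (φ ∘ₗ f) N.mkQ_surjective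
  have hψ' : ∀ x, N.mkQ (ψ x) = φ (f x) := fun x => LinearMap.congr_fun hψ x
  let a : Fin m → Fin n → R := fun j => g (Pi.single j 1)
  have hmem : ∀ j, ψ (a j) ∈ N := fun j => by
    have h0 : f (a j) = 0 := (hfg _).2 ⟨_, rfl⟩
    rw [← Submodule.Quotient.mk_eq_zero, ← Submodule.mkQ_apply, hψ', h0, map_zero]
  have hsum : ∀ (c : Fin n → R) (θ : (Fin n → R) →ₗ[R] M),
      θ c = ∑ i, c i • θ (Pi.single i 1) := fun c θ => by
    conv_lhs => rw [pi_eq_sum_univ' c]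
    simp [map_sum]
  let W : Submodule R (Fin m → R) := Submodule.span R (Set.range fun i : Fin n => fun j => a j i)
  let q : Fin m → (Fin m → R) ⧸ W := fun j => W.mkQ (Pi.single j 1)
  have hqs : ∀ c : Fin m → R, ∑ j, c j • q j = W.mkQ c := fun c => by
    simp only [q, ← map_smul, ← map_sum]
    congr 1
    ext k
    simp [Finset.sum_apply, Pi.single_apply]
  let ν : Fin m → N := fun j => ⟨ψ (a j), hmem j⟩
  have hzero : ∑ j, q j ⊗ₜ[R] ν j = 0 := by
    apply hN
    rw [map_zero, map_sum]
    simp only [LinearMap.lTensor_tmul, Submodule.subtype_apply, ν]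
    have : ∀ j, q j ⊗ₜ[R] ψ (a j) = ∑ i, (a j i • q j) ⊗ₜ[R] ψ (Pi.single i 1) := fun j => by
      rw [hsum (a j) ψ, TensorProduct.tmul_sum]
      simp [TensorProduct.smul_tmul]
    simp only [this]
    rw [Finset.sum_comm]
    refine Finset.sum_eq_zero fun i _ => ?_
    rw [← TensorProduct.sum_tmul, hqs (fun j => a j i)]
    have : W.mkQ (fun j => a j i) = 0 := by
      rw [Submodule.mkQ_apply, Submodule.Quotient.mk_eq_zero]
      exact Submodule.subset_span ⟨i, rfl⟩
    rw [this, TensorProduct.zero_tmul]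
  have hspan : Submodule.span R (Set.range q) = ⊤ := by
    rw [eq_top_iff]
    rintro x -
    obtain ⟨c, rfl⟩ := W.mkQ_surjective x
    rw [← hqs]
    exact Submodule.sum_mem _ fun j _ => Submodule.smul_mem _ _ (Submodule.subset_span ⟨j, rfl⟩)
  obtain ⟨k, c, y, hc, hc0⟩ := TensorProduct.vanishesTrivially_of_sum_tmul_eq_zero R hspan hzero
  have hb : ∀ κ, ∃ b : Fin n → R, ∑ i, b i • (fun j => a j i) = fun j => c j κ := fun κ => by
    have := hc0 κ
    rw [hqs (fun j => c j κ), Submodule.mkQ_apply, Submodule.Quotient.mk_eq_zero] at this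
    exact (Submodule.mem_span_range_iff_exists_fun R).1 this
  choose b hb using hb
  let z : Fin n → M := fun i => ∑ κ, b κ i • (y κ : M)
  have hz : ∀ i, z i ∈ N := fun i => N.sum_mem fun κ _ => N.smul_mem _ (y κ).2
  let χ : (Fin n → R) →ₗ[R] M := Fintype.linearCombination R z
  have hχN : ∀ x, χ x ∈ N := fun x => by
    simp only [χ, Fintype.linearCombination_apply]
    exact N.sum_mem fun i _ => N.smul_mem _ (hz i)
  have hχa : ∀ j, χ (a j) = ψ (a j) := fun j => by
    have h1 : ψ (a j) = ∑ κ, c j κ • (y κ : M) := by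
      have := congrArg Subtype.val (hc j)
      simpa [ν] using this
    have h2 : ∀ κ, c j κ = ∑ i, b κ i * a j i := fun κ => by
      have := congrFun (hb κ) j
      simpa [Finset.sum_apply] using this.symm
    rw [h1]
    simp only [χ, Fintype.linearCombination_apply, z, h2, Finset.sum_smul, Finset.smul_sum]
    rw [Finset.sum_comm]
    refine Finset.sum_congr rfl fun κ _ => Finset.sum_congr rfl fun i _ => ?_
    rw [smul_smul, mul_comm]
  have hg : (ψ - χ) ∘ₗ g = 0 := by
    refine LinearMap.pi_ext' fun j => ?_
    ext
    simpa [a, sub_eq_zero] using (hχa j).symm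
  have hker : LinearMap.ker f ≤ LinearMap.ker (ψ - χ) := by
    intro x hx
    obtain ⟨w, rfl⟩ := (hfg x).1 hx
    exact LinearMap.congr_fun hg w
  refine ⟨(LinearMap.ker f).liftQ (ψ - χ) hker ∘ₗ (f.quotKerEquivOfSurjective hf).symm.toLinearMap, ?_⟩
  ext x
  obtain ⟨w, rfl⟩ := hf x
  have e : (f.quotKerEquivOfSurjective hf).symm (f w) = (LinearMap.ker f).mkQ w := by
    rw [LinearEquiv.symm_apply_eq]; rfl
  simp only [LinearMap.comp_apply, LinearEquiv.coe_coe, e]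
  change N.mkQ (ψ w - χ w) = _
  rw [map_sub, hψ', Submodule.mkQ_apply N (χ w), (Submodule.Quotient.mk_eq_zero N).2 (hχN w), sub_zero]

theorem fp_of_coherent {R : Type u} [CommRing R] (hR : IsNonnilCoherent R) :
    ∀ (n : ℕ) (K : Submodule R (Fin n → R)), K.FG →
      (∀ x : Fin n → R, ∃ I : Ideal R, ¬ I ≤ nilradical R ∧ ∀ a ∈ I, a • x ∈ K) →
      Module.FinitePresentation R K := by
  intro n
  induction n with
  | zero =>
    intro K _ _
    have : Subsingleton K := inferInstance
    have : Module.Projective R K := inferInstance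
    exact Module.finitePresentation_of_projective R K
  | succ n ih =>
    intro K hK ht
    let π : (Fin (n+1) → R) →ₗ[R] R := LinearMap.proj 0
    let ι : (Fin n → R) →ₗ[R] (Fin (n+1) → R) :=
      LinearMap.pi (Fin.cons 0 fun i => LinearMap.proj i)
    have hι0 : ∀ x, ι x 0 = 0 := fun x => rfl
    have hιs : ∀ x i, ι x (Fin.succ i) = x i := fun x i => rfl
    let I : Ideal R := K.map π
    have hI : Module.FinitePresentation R I := by
      refine hR I (hK.map π) fun hle => ?_
      obtain ⟨J, hJ, hJK⟩ := ht (fun _ => 1)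
      refine hJ fun a ha => hle ⟨_, hJK a ha, by simp [π]⟩
    let l : K →ₗ[R] I := π.submoduleMap K
    have hl : Function.Surjective l := π.submoduleMap_surjective K
    have : Module.Finite R K := Module.Finite.iff_fg.2 hK
    have hlk := Module.FinitePresentation.fg_ker l hl
    let K' : Submodule R (Fin n → R) := K.comap ι
    let e₁ : K' →ₗ[R] LinearMap.ker l :=
      LinearMap.codRestrict _ (ι.restrict (p := K') (q := K) (fun x hx => hx)) (fun x => by
        apply Subtype.ext
        rfl)
    have he₁ : ∀ x i, ((e₁ x : K) : Fin (n+1) → R) i = ι x i := fun x i => rfl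
    let e : K' ≃ₗ[R] LinearMap.ker l := LinearEquiv.ofBijective e₁ (by
      constructor
      · intro x y hxy
        ext i
        have h1 : ((e₁ x : K) : Fin (n+1) → R) i.succ = ((e₁ y : K) : Fin (n+1) → R) i.succ := by
          rw [hxy]
        exact h1
      · rintro ⟨⟨x, hx⟩, hx0⟩
        have hx0' : x 0 = 0 := congrArg Subtype.val hx0
        have hxx : ι (fun i => x i.succ) = x := by
          ext i
          refine Fin.cases ?_ (fun i => ?_) i
          · rw [hι0, hx0']
          · rw [hιs]
        refine ⟨⟨fun i => x i.succ, by
          change ι _ ∈ K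
          rw [hxx]; exact hx⟩, ?_⟩
        apply Subtype.ext
        apply Subtype.ext
        exact hxx)
    have hk : Module.Finite R (LinearMap.ker l) := Module.Finite.iff_fg.2 hlk
    have hK' : K'.FG := Module.Finite.iff_fg.1 (Module.Finite.equiv e.symm)
    have := ih K' hK' (fun x => by
      obtain ⟨J, hJ, hJK⟩ := ht (ι x)
      refine ⟨J, hJ, fun a ha => ?_⟩
      change ι _ ∈ K
      rw [map_smul]
      exact hJK a ha)
    have : Module.FinitePresentation R (LinearMap.ker l) := 
      Module.FinitePresentation.of_equiv (R := R) (M := K') (N := LinearMap.ker l) e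
    exact Module.finitePresentation_of_ker l hl

theorem coherent_forward {R : Type u} [CommRing R] (hR : IsNonnilCoherent R)
    (M : Type u) [AddCommGroup M] [Module R M] (N : Submodule R M)
    (hM : IsNonnilFPInjective R M) (hN : Submodule.IsPure R N) :
    IsNonnilFPInjective R (M ⧸ N) := by
  intro T _ _ hT ht
  obtain ⟨n, m, f, g, hf, hfg⟩ := Module.FinitePresentation.exists_fin' R T
  rw [subsingleton_ext_iff f hf]
  have hM' := (subsingleton_ext_iff f hf M).1 (hM T hT ht)
  have : Module.FinitePresentation R (LinearMap.ker f) := by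
    refine fp_of_coherent hR n _ (Module.FinitePresentation.fg_ker f hf) fun x => ?_
    obtain ⟨I, hI, h⟩ := ht (f x)
    exact ⟨I, hI, fun a ha => by simpa using h a ha⟩
  intro φ
  obtain ⟨ψ, hψ⟩ := pure_lift N hN φ
  obtain ⟨h, hh⟩ := hM' ψ
  refine ⟨N.mkQ ∘ₗ h, fun k => ?_⟩
  rw [← hψ, LinearMap.comp_apply, LinearMap.comp_apply, hh]

theorem exists_inj (R : Type u) [CommRing R] (X : Type u) [AddCommGroup X] [Module R X] :
    ∃ (E : ModuleCat.{u} R) (ι : X →ₗ[R] E), Function.Injective ι ∧ Module.Injective R E := by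
  let E := Injective.under (ModuleCat.of R X)
  refine ⟨E, (Injective.ι (ModuleCat.of R X)).hom, (ModuleCat.mono_iff_injective _).1 inferInstance, ?_⟩
  have : CategoryTheory.Injective (ModuleCat.of R E) := inferInstanceAs (CategoryTheory.Injective E)
  exact Module.injective_module_of_injective_object R E

theorem inj_nonnil {R : Type u} [CommRing R] (M : Type u) [AddCommGroup M] [Module R M]
    [Module.Injective R M] : IsNonnilFPInjective R M := by
  intro T _ _ hT ht
  obtain ⟨n, m, f, g, hf, hfg⟩ := Module.FinitePresentation.exists_fin' R T
  rw [subsingleton_ext_iff f hf]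
  intro φ
  obtain ⟨h, hh⟩ := Module.Injective.extension_property R M _ _ (LinearMap.ker f).subtype
    (Submodule.injective_subtype _) φ
  exact ⟨h, fun k => LinearMap.congr_fun hh k⟩

/-- The submodule of eventually zero families. -/
def evZero {R : Type u} [CommRing R] {A : Type u} [SemilatticeSup A] [Nonempty A] (E : A → ModuleCat.{u} R) :
    Submodule R (∀ α, E α) where
  carrier := {x | ∃ α, ∀ β, α ≤ β → x β = 0}
  zero_mem' := ⟨Classical.arbitrary A, fun _ _ => rfl⟩
  add_mem' := by
    rintro x y ⟨α, hα⟩ ⟨β, hβ⟩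
    refine ⟨α ⊔ β, fun γ hγ => ?_⟩
    rw [Pi.add_apply, hα γ (le_sup_left.trans hγ), hβ γ (le_sup_right.trans hγ), add_zero]
  smul_mem' := by
    rintro r x ⟨α, hα⟩
    refine ⟨α, fun γ hγ => ?_⟩
    rw [Pi.smul_apply, hα γ hγ, smul_zero]

open Classical in
theorem evZero_pure {R : Type u} [CommRing R] {A : Type u} [SemilatticeSup A] [Nonempty A]
    (E : A → ModuleCat.{u} R) : Submodule.IsPure R (evZero E) := by
  intro Q _ _
  let p : A → (∀ α, E α) →ₗ[R] evZero E := fun α =>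
    { toFun := fun x => ⟨fun β => if α ≤ β then 0 else x β, α, fun β hβ => if_pos hβ⟩
      map_add' := fun x y => by
        ext β
        by_cases h : α ≤ β <;> simp [h]
      map_smul' := fun r x => by
        ext β
        by_cases h : α ≤ β <;> simp [h] }
  have key : ∀ x : TensorProduct R Q (evZero E), ∃ α, ∀ β, α ≤ β →
      LinearMap.lTensor Q (p β) (LinearMap.lTensor Q (evZero E).subtype x) = x := by
    intro x
    induction x using TensorProduct.induction_on with
    | zero => exact ⟨Classical.arbitrary A, fun _ _ => by simp⟩
    | tmul q x =>
      obtain ⟨x, α, hα⟩ := x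
      refine ⟨α, fun β hβ => ?_⟩
      simp only [LinearMap.lTensor_tmul]
      congr 1
      apply Subtype.ext
      funext γ
      change (if β ≤ γ then 0 else x γ) = x γ
      split_ifs with h
      · exact (hα γ (hβ.trans h)).symm
      · rfl
    | add x y hx hy =>
      obtain ⟨α, hα⟩ := hx
      obtain ⟨β, hβ⟩ := hy
      refine ⟨α ⊔ β, fun γ hγ => ?_⟩
      rw [map_add, map_add, hα γ (le_sup_left.trans hγ), hβ γ (le_sup_right.trans hγ)]
  rw [injective_iff_map_eq_zero]
  intro x hx
  obtain ⟨α, hα⟩ := key x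
  rw [← hα α le_rfl, hx, map_zero]

open Classical in
theorem coherent_backward {R : Type u} [CommRing R]
    (H : ∀ (M : Type u) [AddCommGroup M] [Module R M] (N : Submodule R M),
        IsNonnilFPInjective R M → Submodule.IsPure R N →
          IsNonnilFPInjective R (M ⧸ N)) : IsNonnilCoherent R := by
  intro I hI hnil
  have : Module.Finite R I := Module.Finite.iff_fg.2 hI
  obtain ⟨n, p, hp⟩ := Module.Finite.exists_fin' R I
  refine Module.finitePresentation_of_free_of_surjective p hp ?_
  let F := Fin n → R
  let A := Finset (LinearMap.ker p)
  let S : A → Submodule R F := fun α =>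
    (Submodule.span R (α : Set (LinearMap.ker p))).map (LinearMap.ker p).subtype
  have hSle : ∀ α, S α ≤ LinearMap.ker p := fun α => Submodule.map_subtype_le _ _
  have hSfg : ∀ α, (S α).FG := fun α => Submodule.FG.map _ ⟨α, rfl⟩
  have hSmem : ∀ (k : LinearMap.ker p) (α : A), {k} ≤ α → (k : F) ∈ S α := fun k α h =>
    ⟨k, Submodule.subset_span (h (Finset.mem_singleton_self k)), rfl⟩
  choose E ι hι hE using fun α => exists_inj R (F ⧸ S α)
  have hQ := H (∀ α, E α) (evZero E) (inj_nonnil _) (evZero_pure E)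
  let N := evZero E
  let δ : F →ₗ[R] (∀ α, E α) := LinearMap.pi fun α => ι α ∘ₗ (S α).mkQ
  have hδ : ∀ x α, δ x α = 0 ↔ x ∈ S α := fun x α => by
    change ι α ((S α).mkQ x) = 0 ↔ _
    rw [map_eq_zero_iff _ (hι α), Submodule.mkQ_apply, Submodule.Quotient.mk_eq_zero]
  have hker : LinearMap.ker p ≤ LinearMap.ker (N.mkQ ∘ₗ δ) := by
    intro x hx
    rw [LinearMap.mem_ker, LinearMap.comp_apply, Submodule.mkQ_apply, Submodule.Quotient.mk_eq_zero]
    exact ⟨{⟨x, hx⟩}, fun β hβ => (hδ x β).2 (hSmem ⟨x, hx⟩ β hβ)⟩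
  let φ : I →ₗ[R] (∀ α, E α) ⧸ N :=
    (LinearMap.ker p).liftQ (N.mkQ ∘ₗ δ) hker ∘ₗ (p.quotKerEquivOfSurjective hp).symm.toLinearMap
  have hφ : ∀ x, φ (p x) = N.mkQ (δ x) := fun x => by
    have e : (p.quotKerEquivOfSurjective hp).symm (p x) = (LinearMap.ker p).mkQ x := by
      rw [LinearEquiv.symm_apply_eq]; rfl
    simp only [φ, LinearMap.comp_apply, LinearEquiv.coe_coe, e]
    rfl
  have hT : Module.FinitePresentation R (R ⧸ I) :=
    Module.finitePresentation_of_free_of_surjective I.mkQ I.mkQ_surjective (by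
      rw [Submodule.ker_mkQ]; exact hI)
  have ht : IsPhiTorsion R (R ⧸ I) := by
    intro t
    obtain ⟨t, rfl⟩ := Submodule.mkQ_surjective _ t
    refine ⟨I, hnil, fun a ha => ?_⟩
    rw [← map_smul, Submodule.mkQ_apply, Submodule.Quotient.mk_eq_zero]
    exact I.mul_mem_right t ha
  have hx := (subsingleton_ext_iff (Submodule.mkQ I) I.mkQ_surjective _).1 (hQ _ hT ht)
  let c : LinearMap.ker (Submodule.mkQ I) →ₗ[R] I :=
    (LinearEquiv.ofEq _ _ (Submodule.ker_mkQ I)).toLinearMap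
  obtain ⟨h, hh⟩ := hx (φ ∘ₗ c)
  have hh' : ∀ i : I, h i = φ i := fun i => hh ⟨i, by rw [Submodule.ker_mkQ]; exact i.2⟩
  obtain ⟨x, hx⟩ := N.mkQ_surjective (h 1)
  let b : Fin n → F := fun i => Pi.single i 1
  have hev : ∀ i, ∃ α, ∀ β, α ≤ β → ((p (b i) : R) • x - δ (b i)) β = 0 := fun i => by
    have : N.mkQ ((p (b i) : R) • x - δ (b i)) = 0 := by
      rw [map_sub, map_smul, hx, ← map_smul, smul_eq_mul, mul_one, hh', hφ, sub_self]
    rw [Submodule.mkQ_apply, Submodule.Quotient.mk_eq_zero] at this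
    exact this
  choose α hα using hev
  let β : A := Finset.univ.sup α
  have hβ : ∀ i, (p (b i) : R) • x β = δ (b i) β := fun i => by
    have := hα i β (Finset.le_sup (Finset.mem_univ i))
    rwa [Pi.sub_apply, Pi.smul_apply, sub_eq_zero] at this
  have hlin : ∀ r : F, (p r : R) • x β = δ r β := by
    have : (LinearMap.toSpanSingleton R (E β) (x β)) ∘ₗ I.subtype ∘ₗ p
        = LinearMap.proj β ∘ₗ δ := by
      refine LinearMap.pi_ext' fun i => ?_
      ext
      exact hβ i
    exact fun r => LinearMap.congr_fun this r
  have : LinearMap.ker p = S β := by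
    refine le_antisymm (fun r hr => ?_) (hSle β)
    rw [← hδ, ← hlin, LinearMap.mem_ker.1 hr]
    simp
  rw [this]
  exact hSfg β

/-- A φ-ring `R` is nonnil-coherent if and only if every pure quotient
of a nonnil-FP-injective `R`-module is nonnil-FP-injective. -/
theorem nonnilCoherent_iff_pure_quotient_nonnilFPInjective (R : Type u) [CommRing R]
    (hR : IsPhiRing R) :
    IsNonnilCoherent R ↔
      ∀ (M : Type u) [AddCommGroup M] [Module R M] (N : Submodule R M),
        IsNonnilFPInjective R M → Submodule.IsPure R N →
          IsNonnilFPInjective R (M ⧸ N) := by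
  refine ⟨fun h M _ _ N hM hN => coherent_forward h M N hM hN, fun h => coherent_backward h⟩
end

section
/- Let R be a φ-ring. Then R is nonnil-coherent if and only if every direct limit (filtered colimit over a directed index set) of nonnil-FP-injective R-modules is nonnil-FP-injective. -/
open CategoryTheory

universe u

/-- maps from the kernel extend -/
def KerExtends (R : Type u) [CommRing R] {P T : Type u} [AddCommGroup P] [Module R P]
    [AddCommGroup T] [Module R T] (p : P →ₗ[R] T) (M : Type u) [AddCommGroup M] [Module R M] :
    Prop :=
  ∀ g : LinearMap.ker p →ₗ[R] M, ∃ h : P →ₗ[R] M, ∀ x : LinearMap.ker p, h x = g x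

theorem KerExtends.transfer {R : Type u} [CommRing R] {P Q T : Type u} [AddCommGroup P] [Module R P]
    [AddCommGroup Q] [Module R Q] [Module.Projective R P] [Module.Projective R Q]
    [AddCommGroup T] [Module R T] (p : P →ₗ[R] T) (q : Q →ₗ[R] T)
    (hp : Function.Surjective p) (hq : Function.Surjective q)
    (M : Type u) [AddCommGroup M] [Module R M] (H : KerExtends R p M) : KerExtends R q M := by
  intro g
  obtain ⟨α, hα⟩ := Module.projective_lifting_property p q hp
  obtain ⟨β, hβ⟩ := Module.projective_lifting_property q p hq
  have hα' : ∀ x, p (α x) = q x := fun x => LinearMap.congr_fun hα x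
  have hβ' : ∀ x, q (β x) = p x := fun x => LinearMap.congr_fun hβ x
  let β' : LinearMap.ker p →ₗ[R] LinearMap.ker q :=
    (β ∘ₗ (LinearMap.ker p).subtype).codRestrict _ (fun x => by
      simp [hβ'])
  let γ : Q →ₗ[R] LinearMap.ker q :=
    (LinearMap.id - β ∘ₗ α).codRestrict _ (fun x => by simp [hβ', hα'])
  obtain ⟨h, hh⟩ := H (g ∘ₗ β')
  refine ⟨h ∘ₗ α + g ∘ₗ γ, fun x => ?_⟩
  have hx : p (α x) = 0 := by rw [hα']; exact x.2
  have h1 := hh ⟨α x, hx⟩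
  simp only [LinearMap.add_apply, LinearMap.comp_apply] at h1 ⊢
  rw [h1, ← map_add]
  congr 1
  ext
  change β (α x) + ((x : Q) - β (α x)) = x
  abel

theorem ext_aux {R : Type u} [CommRing R] (T M : ModuleCat.{u} R) (P : ProjectiveResolution T) :
    Subsingleton (((Ext R (ModuleCat.{u} R) 1).obj (Opposite.op T)).obj M) ↔
    ∀ g : P.complex.X 1 ⟶ M, P.complex.d 2 1 ≫ g = 0 → ∃ h : P.complex.X 0 ⟶ M, P.complex.d 1 0 ≫ h = g := by
  rw [← ModuleCat.isZero_iff_subsingleton, (P.isoExt 1 M).isZero_iff,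
    ← HomologicalComplex.exactAt_iff_isZero_homology,
    HomologicalComplex.exactAt_iff' _ 0 1 2 (by simp) (by simp),
    ShortComplex.moduleCat_exact_iff]
  rfl

theorem kerExtends_iff_cocycle {R : Type u} [CommRing R] {A B C T : Type u}
    [AddCommGroup A] [Module R A] [AddCommGroup B] [Module R B] [AddCommGroup C] [Module R C]
    [AddCommGroup T] [Module R T] (d₂ : A →ₗ[R] B) (d₁ : B →ₗ[R] C) (p : C →ₗ[R] T)
    (h1 : Function.Exact d₂ d₁) (h0 : Function.Exact d₁ p)
    (M : Type u) [AddCommGroup M] [Module R M] :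
    (∀ g : B →ₗ[R] M, g ∘ₗ d₂ = 0 → ∃ h : C →ₗ[R] M, h ∘ₗ d₁ = g) ↔ KerExtends R p M := by
  let δ : B →ₗ[R] LinearMap.ker p := d₁.codRestrict _ h0.apply_apply_eq_zero
  have hδ : Function.Surjective δ := by
    rintro ⟨x, hx⟩
    obtain ⟨y, hy⟩ := (h0 x).1 hx
    exact ⟨y, Subtype.ext hy⟩
  constructor
  · intro H g
    obtain ⟨h, hh⟩ := H (g ∘ₗ δ) (by
      ext y
      have : δ (d₂ y) = 0 := Subtype.ext (h1.apply_apply_eq_zero y)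
      simp [this])
    refine ⟨h, fun x => ?_⟩
    obtain ⟨y, rfl⟩ := hδ x
    exact LinearMap.congr_fun hh y
  · intro H g hg
    have hk : LinearMap.ker δ ≤ LinearMap.ker g := by
      intro x hx
      obtain ⟨y, rfl⟩ := (h1 x).1 (congrArg Subtype.val hx)
      exact LinearMap.congr_fun hg y
    let e := δ.quotKerEquivOfSurjective hδ
    obtain ⟨h, hh⟩ := H (((LinearMap.ker δ).liftQ g hk) ∘ₗ e.symm.toLinearMap)
    refine ⟨h, ?_⟩
    ext y
    have he : e.symm (δ y) = Submodule.Quotient.mk y := by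
      rw [LinearEquiv.symm_apply_eq]; rfl
    change h (δ y).1 = _
    rw [hh (δ y)]
    simp [he]

theorem ext_aux2 {R : Type u} [CommRing R] (T M : ModuleCat.{u} R) (P : ProjectiveResolution T) :
    Subsingleton (((Ext R (ModuleCat.{u} R) 1).obj (Opposite.op T)).obj M) ↔
    KerExtends R (T := T) (P.π.f 0).hom M := by
  have hex1 : Function.Exact (P.complex.d 2 1).hom (P.complex.d 1 0).hom :=
    (ShortComplex.ShortExact.moduleCat_exact_iff_function_exact _).1 (P.exact_succ 0)
  have hex0 : Function.Exact (P.complex.d 1 0).hom (P.π.f 0).hom :=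
    (ShortComplex.ShortExact.moduleCat_exact_iff_function_exact _).1 P.exact₀
  rw [ext_aux]
  refine Iff.trans ?_ (kerExtends_iff_cocycle _ _ _ hex1 hex0 M)
  constructor
  · intro H g hg
    obtain ⟨h, hh⟩ := H (ModuleCat.ofHom g) (ModuleCat.hom_ext hg)
    exact ⟨h.hom, congrArg ModuleCat.Hom.hom hh⟩
  · intro H g hg
    obtain ⟨h, hh⟩ := H g.hom (congrArg ModuleCat.Hom.hom hg)
    exact ⟨ModuleCat.ofHom h, ModuleCat.hom_ext hh⟩

theorem ext_iff_kerExtends {R : Type u} [CommRing R] {P T : Type u} [AddCommGroup P] [Module R P]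
    [Module.Projective R P]
    [AddCommGroup T] [Module R T] (p : P →ₗ[R] T) (hp : Function.Surjective p)
    (M : Type u) [AddCommGroup M] [Module R M] :
    Subsingleton (((Ext R (ModuleCat.{u} R) 1).obj (Opposite.op (ModuleCat.of R T))).obj
      (ModuleCat.of R M)) ↔ KerExtends R p M := by
  let P' := projectiveResolution (ModuleCat.of R T)
  rw [ext_aux2 _ _ P']
  have : Module.Projective R (P'.complex.X 0) :=
    (IsProjective.iff_projective _ ).2 (P'.projective 0)
  have hs : Function.Surjective (P'.π.f 0) := (ModuleCat.epi_iff_surjective _).1 inferInstance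
  exact ⟨KerExtends.transfer _ _ hs hp M, KerExtends.transfer _ _ hp hs M⟩
theorem fp_submodule {R : Type u} [CommRing R] (coh : IsNonnilCoherent R) (s : R)
    (hs : s ∉ nilradical R) : ∀ (n : ℕ) (K : Submodule R (Fin n → R)), K.FG →
    (∀ x : Fin n → R, s • x ∈ K) → Module.FinitePresentation R K := by
  intro n
  induction n with
  | zero =>
    intro K _ _
    have : Module.Finite R K := Module.Finite.of_fg ‹_›
    exact Module.finitePresentation_of_projective R K
  | succ n ih =>
    intro K hK hsK
    have : Module.Finite R K := Module.Finite.of_fg hK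
    let φ : K →ₗ[R] R := LinearMap.proj 0 ∘ₗ K.subtype
    have hI : Module.FinitePresentation R (LinearMap.range φ) := by
      refine coh (LinearMap.range φ) (by
        rw [LinearMap.range_eq_map]; exact Module.Finite.fg_top.map φ) (fun h => hs (h ?_))
      exact ⟨⟨_, hsK 1⟩, by simp [φ]⟩
    have hsurj : Function.Surjective φ.rangeRestrict := LinearMap.surjective_rangeRestrict φ
    have hfg : (LinearMap.ker φ.rangeRestrict).FG :=
      Module.FinitePresentation.fg_ker _ hsurj
    have : Module.Finite R (LinearMap.ker φ.rangeRestrict) := Module.Finite.of_fg hfg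
    let t : LinearMap.ker φ.rangeRestrict →ₗ[R] (Fin n → R) :=
      LinearMap.funLeft R R Fin.succ ∘ₗ K.subtype ∘ₗ (LinearMap.ker φ.rangeRestrict).subtype
    have ht : Function.Injective t := by
      rw [injective_iff_map_eq_zero]
      intro x hx
      apply Subtype.ext
      apply Subtype.ext
      have h0 : x.1.1 0 = 0 := congrArg Subtype.val x.2
      funext k
      refine Fin.cases h0 (fun k => ?_) k
      exact congrFun hx k
    have h0 : Module.FinitePresentation R (LinearMap.range t) := by
      refine ih _ (by rw [LinearMap.range_eq_map]; exact Module.Finite.fg_top.map t) ?_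
      intro x
      refine ⟨⟨⟨s • Fin.cons 0 x, hsK _⟩, ?_⟩, ?_⟩
      · apply Subtype.ext
        simp [φ]
      · funext k
        simp [t, LinearMap.funLeft]
    have : Module.FinitePresentation R (LinearMap.ker φ.rangeRestrict) :=
      Module.FinitePresentation.of_equiv (R := R) (M := LinearMap.range t)
        (N := LinearMap.ker φ.rangeRestrict) (LinearEquiv.ofInjective t ht).symm
    exact Module.finitePresentation_of_ker _ hsurj

theorem exists_lift_directLimit {R : Type u} [CommRing R] {K : Type u} [AddCommGroup K]
    [Module R K] (hK : Module.FinitePresentation R K) (ι : Type u) [Preorder ι]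
    [IsDirected ι (· ≤ ·)] [Nonempty ι] [DecidableEq ι]
    (G : ι → Type u) [∀ i, AddCommGroup (G i)] [∀ i, Module R (G i)]
    (f : ∀ i j, i ≤ j → G i →ₗ[R] G j) [DirectedSystem G (fun i j h => f i j h)]
    (g : K →ₗ[R] Module.DirectLimit G f) :
    ∃ (j : ι) (g' : K →ₗ[R] G j), ∀ x, Module.DirectLimit.of R ι G f j (g' x) = g x := by
  obtain ⟨n, p, hp⟩ := Module.Finite.exists_fin' R K
  obtain ⟨S, hS⟩ := Module.FinitePresentation.fg_ker p hp
  choose a x hx using fun k : Fin n =>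
    Module.DirectLimit.exists_of (g (p (Pi.single k 1)))
  obtain ⟨i, hi⟩ := Finite.exists_le a
  let φ : (Fin n → R) →ₗ[R] G i := Fintype.linearCombination R fun k => f (a k) i (hi k) (x k)
  have hφ : Module.DirectLimit.of R ι G f i ∘ₗ φ = g ∘ₗ p := by
    refine LinearMap.pi_ext' fun k => ?_
    ext
    simp [φ, Fintype.linearCombination_apply_single, hx]
  have hφ' : ∀ y, Module.DirectLimit.of R ι G f i (φ y) = g (p y) := LinearMap.congr_fun hφ
  have : ∀ y : S, ∃ j, ∃ hij : i ≤ j, f i j hij (φ y) = 0 := by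
    intro y
    apply Module.DirectLimit.of.zero_exact (R := R)
    have : y.1 ∈ LinearMap.ker p := hS ▸ Submodule.subset_span y.2
    rw [hφ', show p y = 0 from this, map_zero]
  choose b hb hb0 using this
  obtain ⟨j', hj'⟩ := Finite.exists_le b
  obtain ⟨j, hij, hjj⟩ := exists_ge_ge i j'
  have hk : LinearMap.ker p ≤ LinearMap.ker (f i j hij ∘ₗ φ) := by
    rw [← hS, Submodule.span_le]
    intro y hy
    have h1 := hb0 ⟨y, hy⟩
    have h2 := DirectedSystem.map_map (f := fun i j h => f i j h) (hb ⟨y, hy⟩)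
      ((hj' ⟨y, hy⟩).trans hjj) (φ y)
    simp only [SetLike.mem_coe, LinearMap.mem_ker, LinearMap.comp_apply]
    rw [← h2, h1, map_zero]
  let e := p.quotKerEquivOfSurjective hp
  refine ⟨j, ((LinearMap.ker p).liftQ _ hk) ∘ₗ e.symm.toLinearMap, fun z => ?_⟩
  obtain ⟨y, rfl⟩ := hp z
  have he : e.symm (p y) = Submodule.Quotient.mk y := by
    rw [LinearEquiv.symm_apply_eq]; rfl
  simp [he, hφ']

theorem direction_one {R : Type u} [CommRing R] (hR : IsPhiRing R) (coh : IsNonnilCoherent R)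
    (ι : Type u) [Preorder ι] [IsDirected ι (· ≤ ·)] [Nonempty ι] [DecidableEq ι]
    (G : ι → Type u) [∀ i, AddCommGroup (G i)] [∀ i, Module R (G i)]
    (f : ∀ i j, i ≤ j → G i →ₗ[R] G j) [DirectedSystem G (fun i j h => f i j h)]
    (hG : ∀ i, IsNonnilFPInjective R (G i)) :
    IsNonnilFPInjective R (Module.DirectLimit G f) := by
  intro T _ _ hT htor
  obtain ⟨n, p, hp⟩ := Module.Finite.exists_fin' R T
  have hfg := Module.FinitePresentation.fg_ker p hp
  rw [ext_iff_kerExtends p hp]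
  have : ∀ k : Fin n, ∃ s : R, s ∉ nilradical R ∧ s • p (Pi.single k 1) = 0 := by
    intro k
    obtain ⟨I, hI, h⟩ := htor (p (Pi.single k 1))
    obtain ⟨s, hs, hs'⟩ := SetLike.not_le_iff_exists.1 hI
    exact ⟨s, hs', h s hs⟩
  choose s hs hs0 using this
  have := hR.1
  have hK : Module.FinitePresentation R (LinearMap.ker p) := by
    refine fp_submodule coh (∏ k, s k) ?_ n _ hfg ?_
    · rw [Ideal.IsPrime.prod_mem_iff]
      rintro ⟨k, -, hk⟩
      exact hs k hk
    · have : (∏ k, s k) • p = 0 := by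
        refine LinearMap.pi_ext' fun k => ?_
        ext
        have : (∏ k, s k) • p (Pi.single k 1) = 0 := by
          rw [← Finset.prod_erase_mul _ _ (Finset.mem_univ k), mul_smul, hs0, smul_zero]
        simpa using this
      intro x
      rw [LinearMap.mem_ker, map_smul]
      exact LinearMap.congr_fun this x
  intro g
  obtain ⟨j, g', hg'⟩ := exists_lift_directLimit hK ι G f g
  obtain ⟨h, hh⟩ := (ext_iff_kerExtends p hp (G j)).1 (hG j T hT htor) g'
  exact ⟨Module.DirectLimit.of R ι G f j ∘ₗ h, fun x => by simp [hh, hg']⟩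

/-- a functorial injective hull -/
abbrev InjEmb (R : Type u) [CommRing R] (M : Type u) [AddCommGroup M] : Type u :=
  CharacterModule M → CharacterModule R

theorem injEmb_injective (R : Type u) [CommRing R] (M : Type u) [AddCommGroup M] :
    Module.Injective R (InjEmb R M) := by
  have : Module.Injective R (CharacterModule R) :=
    Module.Flat.iff_characterModule_injective.1 inferInstance
  infer_instance

/-- the embedding -/
noncomputable def injEmb (R : Type u) [CommRing R] (M : Type u) [AddCommGroup M] [Module R M] :
    M →ₗ[R] InjEmb R M where
  toFun m := fun χ => CharacterModule.dual (LinearMap.toSpanSingleton R M m) χ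
  map_add' a b := by
    funext χ
    ext r
    change χ (r • (a + b)) = χ (r • a) + χ (r • b)
    rw [smul_add, map_add]
  map_smul' a b := by
    funext χ
    ext r
    change χ (r • a • b) = χ ((a • r) • b)
    rw [smul_eq_mul, mul_comm, mul_smul]

theorem injEmb_apply (R : Type u) [CommRing R] (M : Type u) [AddCommGroup M] [Module R M]
    (m : M) (χ : CharacterModule M) (r : R) : injEmb R M m χ r = χ (r • m) := rfl

theorem injEmb_inj (R : Type u) [CommRing R] (M : Type u) [AddCommGroup M] [Module R M]
    (m : M) (h : injEmb R M m = 0) : m = 0 := by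
  apply CharacterModule.eq_zero_of_character_apply
  intro χ
  have := injEmb_apply R M m χ 1
  rw [h, one_smul] at this
  exact this.symm

/-- functoriality -/
noncomputable def injEmbMap {R : Type u} [CommRing R] {M N : Type u} [AddCommGroup M] [Module R M]
    [AddCommGroup N] [Module R N] (f : M →ₗ[R] N) : InjEmb R M →ₗ[R] InjEmb R N :=
  LinearMap.funLeft R (CharacterModule R) (CharacterModule.dual f)

theorem injEmbMap_injEmb {R : Type u} [CommRing R] {M N : Type u} [AddCommGroup M] [Module R M]
    [AddCommGroup N] [Module R N] (f : M →ₗ[R] N) (m : M) :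
    injEmbMap f (injEmb R M m) = injEmb R N (f m) := by
  funext χ
  ext r
  change χ (f (r • m)) = χ (r • f m)
  rw [map_smul]

theorem nonnilFPInjective_of_injective {R : Type u} [CommRing R] (M : Type u) [AddCommGroup M]
    [Module R M] (hM : Module.Injective R M) : IsNonnilFPInjective R M := by
  intro T _ _ hT _
  obtain ⟨n, p, hp⟩ := Module.Finite.exists_fin' R T
  rw [ext_iff_kerExtends p hp]
  intro g
  exact hM.out (LinearMap.ker p).subtype (Submodule.subtype_injective _) g

theorem direction_two {R : Type u} [CommRing R]
    (H : ∀ (ι : Type u) [Preorder ι] [IsDirected ι (· ≤ ·)] [Nonempty ι] [DecidableEq ι]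
        (G : ι → Type u) [∀ i, AddCommGroup (G i)] [∀ i, Module R (G i)]
        (f : ∀ i j, i ≤ j → G i →ₗ[R] G j) [DirectedSystem G (fun i j h => f i j h)],
        (∀ i, IsNonnilFPInjective R (G i)) →
          IsNonnilFPInjective R (Module.DirectLimit G f)) : IsNonnilCoherent R := by
  classical
  intro I hI hnil
  have : Module.Finite R I := Module.Finite.of_fg hI
  obtain ⟨n, p, hp⟩ := Module.Finite.exists_fin' R I
  refine Module.finitePresentation_of_surjective p hp ?_
  let F := Fin n → R
  let ι := {N : Submodule R F // N.FG ∧ N ≤ LinearMap.ker p}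
  have : IsDirected ι (· ≤ ·) := ⟨fun a b => ⟨⟨a.1 ⊔ b.1, a.2.1.sup b.2.1, sup_le a.2.2 b.2.2⟩,
    show a.1 ≤ _ from le_sup_left, show b.1 ≤ _ from le_sup_right⟩⟩
  let i0 : ι := ⟨⊥, Submodule.fg_bot, bot_le⟩
  have hi0 : ∀ i : ι, i0 ≤ i := fun i => show ⊥ ≤ i.1 from bot_le
  have : Nonempty ι := ⟨i0⟩
  let G : ι → Type u := fun N => InjEmb R (F ⧸ N.1)
  let f : ∀ i j : ι, i ≤ j → G i →ₗ[R] G j := fun i j h => injEmbMap (Submodule.factor h)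
  have hsys : DirectedSystem G (fun i j h => f i j h) :=
    { map_self := by
        intro i x
        funext χ
        change x (CharacterModule.dual _ χ) = x χ
        congr 1
        ext y
        obtain ⟨y, rfl⟩ := Submodule.Quotient.mk_surjective _ y
        rfl
      map_map := by
        intro i j k hij hjk x
        funext χ
        change x (CharacterModule.dual _ (CharacterModule.dual _ χ)) = x (CharacterModule.dual _ χ)
        congr 1
        ext y
        obtain ⟨y, rfl⟩ := Submodule.Quotient.mk_surjective _ y
        rfl }
  let em : ∀ i : ι, F →ₗ[R] G i := fun i => injEmb R (F ⧸ i.1) ∘ₗ i.1.mkQ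
  have hem : ∀ i j (h : i ≤ j) x, f i j h (em i x) = em j x := fun i j h x => by
    change injEmbMap _ (injEmb R _ _) = _
    rw [injEmbMap_injEmb]; rfl
  have hem0 : ∀ (i : ι) x, em i x = 0 ↔ x ∈ i.1 := fun i x => by
    constructor
    · intro h
      exact (Submodule.Quotient.mk_eq_zero _).1 (injEmb_inj R (F ⧸ i.1) _ h)
    · intro h
      change injEmb R (F ⧸ i.1) (Submodule.Quotient.mk x) = 0
      rw [(Submodule.Quotient.mk_eq_zero _).2 h, map_zero]
  let of := Module.DirectLimit.of R ι G f
  let q : F →ₗ[R] Module.DirectLimit G f := of i0 ∘ₗ em i0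
  have hq : ∀ i x, of i (em i x) = q x := fun i x => by
    change _ = of i0 (em i0 x)
    rw [← hem i0 i (hi0 i)]
    exact Module.DirectLimit.of_f
  have hqk : LinearMap.ker p ≤ LinearMap.ker q := by
    intro x hx
    let i : ι := ⟨Submodule.span R {x}, Submodule.fg_span_singleton x, by simpa using hx⟩
    rw [LinearMap.mem_ker, ← hq i, (hem0 i x).2 (Submodule.mem_span_singleton_self x), map_zero]
  let e := p.quotKerEquivOfSurjective hp
  let h : I →ₗ[R] Module.DirectLimit G f := ((LinearMap.ker p).liftQ q hqk) ∘ₗ e.symm.toLinearMap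
  have hh : ∀ x, h (p x) = q x := fun x => by
    have he : e.symm (p x) = Submodule.Quotient.mk x := by
      rw [LinearEquiv.symm_apply_eq]; rfl
    simp [h, he]
  have hfp : Module.FinitePresentation R (R ⧸ I) :=
    Module.finitePresentation_of_surjective I.mkQ (Submodule.mkQ_surjective _)
      (by rw [Submodule.ker_mkQ]; exact hI)
  have htor : IsPhiTorsion R (R ⧸ I) := fun t => ⟨I, hnil, fun a ha => by
    obtain ⟨t, rfl⟩ := Submodule.Quotient.mk_surjective _ t
    rw [← Submodule.Quotient.mk_smul, Submodule.Quotient.mk_eq_zero]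
    exact I.mul_mem_right t ha⟩
  have key := (ext_iff_kerExtends I.mkQ (Submodule.mkQ_surjective _) _).1
    (H ι G f (fun i => nonnilFPInjective_of_injective _ (injEmb_injective R _)) (R ⧸ I) hfp htor)
  obtain ⟨g, hg⟩ := key (h ∘ₗ (LinearEquiv.ofEq _ _ (Submodule.ker_mkQ I)).toLinearMap)
  have hg' : ∀ x : I, g x = h x := fun x => hg ⟨x.1, by rw [Submodule.ker_mkQ]; exact x.2⟩
  obtain ⟨i, w, hw⟩ := Module.DirectLimit.exists_of (g 1)
  let act : ∀ j, G j → (F →ₗ[R] G j) := fun j v => LinearMap.toSpanSingleton R _ v ∘ₗ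
    I.subtype ∘ₗ p
  have hact : ∀ j v x, act j v x = (p x : R) • v := fun j v x => rfl
  have hx : ∀ x, of i (em i x - act i w x) = 0 := by
    intro x
    rw [map_sub, hq, hact, map_smul, sub_eq_zero, ← hh, ← hg']
    change _ = (p x : R) • Module.DirectLimit.of R ι G f i w
    rw [hw, ← map_smul, smul_eq_mul, mul_one]
  choose b hb hb0 using fun k : Fin n =>
    Module.DirectLimit.of.zero_exact (R := R) (hx (Pi.single k 1))
  obtain ⟨j', hj'⟩ := Finite.exists_le b
  obtain ⟨j, hij, hjj⟩ := exists_ge_ge i j'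
  have hfin : em j = act j (f i j hij w) := by
    refine LinearMap.pi_ext' fun k => ?_
    ext1
    have h2 := DirectedSystem.map_map (f := fun i j h => f i j h) (hb k) ((hj' k).trans hjj)
      (em i (Pi.single k 1) - act i w (Pi.single k 1))
    rw [hb0 k, map_zero, map_sub, hem, hact, map_smul] at h2
    exact sub_eq_zero.1 h2.symm
  have : LinearMap.ker p = j.1 := by
    refine le_antisymm (fun x hx => ?_) j.2.2
    rw [← hem0 j, hfin, hact, show p x = 0 from hx]
    simp
  rw [this]
  exact j.2.1

/-- A φ-ring `R` is nonnil-coherent if and only if every direct limit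
of nonnil-FP-injective `R`-modules is nonnil-FP-injective. -/
theorem nonnilCoherent_iff_directLimit_nonnilFPInjective (R : Type u) [CommRing R]
    (hR : IsPhiRing R) :
    IsNonnilCoherent R ↔
      ∀ (ι : Type u) [Preorder ι] [IsDirected ι (· ≤ ·)] [Nonempty ι] [DecidableEq ι]
        (G : ι → Type u) [∀ i, AddCommGroup (G i)] [∀ i, Module R (G i)]
        (f : ∀ i j, i ≤ j → G i →ₗ[R] G j) [DirectedSystem G (fun i j h => f i j h)],
        (∀ i, IsNonnilFPInjective R (G i)) →
          IsNonnilFPInjective R (Module.DirectLimit G f) := by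
  constructor
  · intro coh ι _ _ _ _ G _ _ f _ hG
    exact direction_one hR coh ι G f hG
  · exact direction_two
end

section
/- Let R be a φ-ring. The following are equivalent: (1) R is nonnil-coherent; (2) Hom_R(M,E) is φ-flat for every nonnil-FP-injective R-module M and every injective R-module E; (3) Hom_R(M,E) is φ-flat for every nonnil-injective R-module M and every injective R-module E. -/
open CategoryTheory

universe u

lemma tor_res (R : Type u) [CommRing R] (H : Type u) [AddCommGroup H] [Module R H] :
    ∃ (P0 P1 P2 : ModuleCat.{u} R) (d2 : P2 →ₗ[R] P1) (d1 : P1 →ₗ[R] P0) (π : P0 →ₗ[R] H),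
      Module.Projective R P0 ∧ Function.Surjective π ∧ Function.Exact d1 π ∧ Function.Exact d2 d1 ∧
      (∀ (T : Type u) [AddCommGroup T] [Module R T],
        Subsingleton (((Tor (ModuleCat.{u} R) 1).obj (ModuleCat.of R T)).obj (ModuleCat.of R H)) ↔
          Function.Exact (d2.lTensor T) (d1.lTensor T)) ∧ 
      (∀ (M : Type u) [AddCommGroup M] [Module R M],
        Subsingleton (((Ext R (ModuleCat.{u} R) 1).obj (Opposite.op (ModuleCat.of R H))).obj
      (ModuleCat.of R M)) ↔ ∀ f : P1 →ₗ[R] M, f ∘ₗ d2 = 0 → ∃ g : P0 →ₗ[R] M, g ∘ₗ d1 = f) := by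
  let P := projectiveResolution (ModuleCat.of R H)
  refine ⟨P.complex.X 0, P.complex.X 1, P.complex.X 2, (P.complex.d 2 1).hom, (P.complex.d 1 0).hom,
    (P.π.f 0).hom, ?_, ?_, ?_, ?_, ?_, ?_⟩
  · exact (IsProjective.iff_projective _).2 (P.projective 0)
  · exact (ModuleCat.epi_iff_surjective _).1 (inferInstanceAs (Epi (P.π.f 0)))
  · exact (ShortComplex.ShortExact.moduleCat_exact_iff_function_exact _).1 P.exact₀
  · exact (ShortComplex.ShortExact.moduleCat_exact_iff_function_exact _).1 (P.exact_succ 0)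
  · intro T _ _
    have e := P.isoLeftDerivedObj ((MonoidalCategory.tensoringLeft (ModuleCat.{u} R)).obj (ModuleCat.of R T)) 1
    rw [← ModuleCat.isZero_iff_subsingleton, Tor_obj, e.isZero_iff]
    refine (HomologicalComplex.exactAt_iff_isZero_homology _ _).symm.trans ?_
    rw [HomologicalComplex.exactAt_iff' _ 2 1 0 (by simp) (by simp)]
    exact ShortComplex.ShortExact.moduleCat_exact_iff_function_exact _
  · intro M _ _
    rw [← ModuleCat.isZero_iff_subsingleton, (P.isoExt (R := R) 1 (ModuleCat.of R M)).isZero_iff]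
    rw [← HomologicalComplex.exactAt_iff_isZero_homology,
      HomologicalComplex.exactAt_iff' _ 0 1 2 (by simp) (by simp), ShortComplex.moduleCat_exact_iff]
    constructor
    · intro h f hf
      obtain ⟨g, hg⟩ := h (ModuleCat.ofHom f) (ModuleCat.hom_ext hf)
      exact ⟨ModuleCat.Hom.hom g, congrArg ModuleCat.Hom.hom hg⟩
    · intro h f hf
      obtain ⟨g, hg⟩ := h (ModuleCat.Hom.hom f) (congrArg ModuleCat.Hom.hom hf)
      exact ⟨ModuleCat.ofHom g, ModuleCat.hom_ext hg⟩

open TensorProduct in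
lemma exact_iff_inj {R : Type u} [CommRing R] {P2 P1 K P0 : Type u} [AddCommGroup P2] [Module R P2]
    [AddCommGroup P1] [Module R P1] [AddCommGroup K] [Module R K] [AddCommGroup P0] [Module R P0]
    (d2 : P2 →ₗ[R] P1) (q : P1 →ₗ[R] K) (i : K →ₗ[R] P0) (hq : Function.Surjective q)
    (h : Function.Exact d2 q) (T : Type u) [AddCommGroup T] [Module R T] :
    Function.Exact (d2.lTensor T) ((i ∘ₗ q).lTensor T) ↔ Function.Injective (i.lTensor T) := by
  have hex := lTensor_exact T h hq
  have hs := LinearMap.lTensor_surjective T hq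
  rw [LinearMap.lTensor_comp]
  constructor
  · intro H
    rw [injective_iff_map_eq_zero]
    intro a ha
    obtain ⟨b, rfl⟩ := hs a
    exact (hex b).2 ((H b).1 ha)
  · intro H b
    rw [← hex b, LinearMap.comp_apply]
    exact map_eq_zero_iff _ H

open TensorProduct in
lemma one_tmul_zero {R : Type u} [CommRing R] {M : Type u} [AddCommGroup M] [Module R M]
    (I : Ideal R) (x : M) : (1 : R ⧸ I) ⊗ₜ[R] x = 0 ↔ x ∈ I • (⊤ : Submodule R M) := by
  have := TensorProduct.quotTensorEquivQuotSMul_mk_tmul I 1 x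
  rw [map_one, one_smul] at this
  rw [← Submodule.Quotient.mk_eq_zero, ← this, LinearEquiv.map_eq_zero_iff]

open TensorProduct in
lemma exists_one_tmul {R : Type u} [CommRing R] {T M : Type u} [AddCommGroup M] [Module R M]
    [AddCommGroup T] [Module R T] (t : T) (ht : ∀ x : T, ∃ r : R, r • t = x) (z : T ⊗[R] M) :
    ∃ x : M, z = t ⊗ₜ x := by
  induction z with
  | zero => exact ⟨0, by simp⟩
  | tmul a b =>
    obtain ⟨r, rfl⟩ := ht a
    exact ⟨r • b, by rw [TensorProduct.smul_tmul]⟩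
  | add a b ha hb =>
    obtain ⟨x, rfl⟩ := ha
    obtain ⟨y, rfl⟩ := hb
    exact ⟨x + y, by rw [TensorProduct.tmul_add]⟩

open TensorProduct in
lemma quot_inj {R : Type u} [CommRing R] {K P : Type u} [AddCommGroup K] [Module R K]
    [AddCommGroup P] [Module R P] (i : K →ₗ[R] P) (I : Ideal R) :
    Function.Injective (i.lTensor (R ⧸ I)) ↔
      ∀ x : K, i x ∈ I • (⊤ : Submodule R P) → x ∈ I • (⊤ : Submodule R K) := by
  rw [injective_iff_map_eq_zero]
  constructor
  · intro h x hx
    rw [← one_tmul_zero] at hx ⊢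
    exact h _ (by simpa using hx)
  · intro h z hz
    obtain ⟨x, rfl⟩ := exists_one_tmul (1 : R ⧸ I) (fun x => by
      obtain ⟨r, rfl⟩ := Ideal.Quotient.mk_surjective x
      exact ⟨r, by rw [Algebra.smul_def, mul_one]; rfl⟩) z
    rw [LinearMap.lTensor_tmul, one_tmul_zero] at hz
    rw [one_tmul_zero]
    exact h x hz

open TensorProduct in
lemma cyc_inj {R : Type u} [CommRing R] {K P : Type u} [AddCommGroup K] [Module R K]
    [AddCommGroup P] [Module R P] (i : K →ₗ[R] P) {T : Type u} [AddCommGroup T] [Module R T]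
    (t : T) (ht : ∀ x : T, ∃ r : R, r • t = x)
    (h : Function.Injective (i.lTensor (R ⧸ Ideal.torsionOf R T t))) :
    Function.Injective (i.lTensor T) := by
  have e : (R ⧸ Ideal.torsionOf R T t) ≃ₗ[R] T :=
    (Ideal.quotTorsionOfEquivSpanSingleton R T t).trans
      (LinearEquiv.ofTop _ (by
        rw [eq_top_iff]; intro x _; exact Submodule.mem_span_singleton.2 (ht x)))
  have hc : (i.lTensor T) = (e.toLinearMap.rTensor P) ∘ₗ
      (i.lTensor (R ⧸ Ideal.torsionOf R T t)) ∘ₗ e.symm.toLinearMap.rTensor K := by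
    ext a b; simp
  rw [hc]
  exact (LinearEquiv.rTensor P e).injective.comp (h.comp (LinearEquiv.rTensor K e.symm).injective)

open TensorProduct in
lemma ext_inj {R : Type u} [CommRing R] {K P : Type u} [AddCommGroup K] [Module R K]
    [AddCommGroup P] [Module R P] [Module.Flat R P] (i : K →ₗ[R] P)
    {T1 T T2 : Type u} [AddCommGroup T1] [Module R T1] [AddCommGroup T] [Module R T]
    [AddCommGroup T2] [Module R T2] (f : T1 →ₗ[R] T) (g : T →ₗ[R] T2) (hf : Function.Injective f)
    (hg : Function.Surjective g) (hfg : Function.Exact f g)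
    (h1 : Function.Injective (i.lTensor T1)) (h2 : Function.Injective (i.lTensor T2)) :
    Function.Injective (i.lTensor T) := by
  rw [injective_iff_map_eq_zero]
  intro x hx
  have hx2 : g.rTensor K x = 0 := by
    apply h2
    have : (i.lTensor T2) (g.rTensor K x) = g.rTensor P (i.lTensor T x) := by
      rw [← LinearMap.comp_apply, ← LinearMap.comp_apply, LinearMap.lTensor_comp_rTensor,
        LinearMap.rTensor_comp_lTensor]
    rw [this, hx, map_zero, map_zero]
  obtain ⟨y, rfl⟩ := (rTensor_exact K hfg hg x).1 hx2
  have : f.rTensor P (i.lTensor T1 y) = 0 := by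
    rw [← hx, ← LinearMap.comp_apply, ← LinearMap.comp_apply, LinearMap.lTensor_comp_rTensor,
        LinearMap.rTensor_comp_lTensor]
  have h3 := (map_eq_zero_iff _ (Module.Flat.rTensor_preserves_injective_linearMap f hf)).1 this
  rw [(map_eq_zero_iff _ h1).1 h3, map_zero]

open TensorProduct in
lemma tors_inj {R : Type u} [CommRing R] {K P : Type u} [AddCommGroup K] [Module R K]
    [AddCommGroup P] [Module R P] [Module.Flat R P] (i : K →ₗ[R] P)
    (h : ∀ I : Ideal R, ¬ I ≤ nilradical R → Function.Injective (i.lTensor (R ⧸ I)))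
    (T : Type u) [AddCommGroup T] [Module R T] (hT : IsPhiTorsion R T) :
    Function.Injective (i.lTensor T) := by
  have key : ∀ N : Submodule R T, N.FG → Function.Injective (i.lTensor N) := by
    classical
    rintro N ⟨S, rfl⟩
    induction S using Finset.induction_on with
    | empty =>
      rw [injective_iff_map_eq_zero]
      intro a _
      have : Subsingleton (Submodule.span R ((∅ : Finset T) : Set T)) := by
        rw [Finset.coe_empty, Submodule.span_empty]; infer_instance
      exact Subsingleton.elim _ _
    | insert t S _ ih =>
      have hle : Submodule.span R (S : Set T) ≤ Submodule.span R ((insert t S : Finset T) : Set T) :=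
        Submodule.span_mono (by simp)
      have htm : t ∈ Submodule.span R ((insert t S : Finset T) : Set T) :=
        Submodule.subset_span (by simp)
      let f := Submodule.inclusion hle
      refine ext_inj i f (LinearMap.range f).mkQ (Submodule.inclusion_injective hle)
        (Submodule.mkQ_surjective _) (LinearMap.exact_map_mkQ_range f) ih ?_
      refine cyc_inj i ((LinearMap.range f).mkQ ⟨t, htm⟩) ?_ (h _ ?_)
      · intro x
        obtain ⟨⟨y, hy⟩, rfl⟩ := Submodule.mkQ_surjective _ x
        have hy' := hy
        rw [Finset.coe_insert, Submodule.mem_span_insert] at hy'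
        obtain ⟨r, z, hz, hyz⟩ := hy'
        refine ⟨r, ?_⟩
        rw [← map_smul, ← sub_eq_zero, ← map_sub, Submodule.mkQ_apply, Submodule.Quotient.mk_eq_zero]
        refine ⟨-⟨z, hz⟩, ?_⟩
        apply Subtype.ext
        simp [f, hyz]
      · obtain ⟨I, hI, hI2⟩ := hT t
        refine fun hle' => hI (le_trans ?_ hle')
        intro a ha
        rw [Ideal.mem_torsionOf_iff, ← map_smul]
        have : a • (⟨t, htm⟩ : Submodule.span R ((insert t S : Finset T) : Set T)) = 0 :=
          Subtype.ext (hI2 a ha)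
        rw [this, map_zero]
  rw [injective_iff_map_eq_zero]
  intro x hx
  obtain ⟨N, hN, y, rfl⟩ : ∃ N : Submodule R T, N.FG ∧ ∃ y, N.subtype.rTensor K y = x := by
    obtain ⟨N, hN, hy⟩ := Submodule.exists_fg_le_subset_range_rTensor_subtype {x} (by simp)
    exact ⟨N, hN, by simpa using hy⟩
  have : N.subtype.rTensor P (i.lTensor N y) = 0 := by
    rw [← hx, ← LinearMap.comp_apply, ← LinearMap.comp_apply, LinearMap.lTensor_comp_rTensor,
        LinearMap.rTensor_comp_lTensor]
  have h3 := (map_eq_zero_iff _ (Module.Flat.rTensor_preserves_injective_linearMap _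
    N.injective_subtype)).1 this
  rw [(map_eq_zero_iff _ (key N hN)).1 h3, map_zero]

lemma mem_smul_fin {R : Type u} [CommRing R] {M : Type u} [AddCommGroup M] [Module R M] {n : ℕ}
    (a : Fin n → R) (x : M) : x ∈ (Ideal.span (Set.range a)) • (⊤ : Submodule R M) ↔
      ∃ p : Fin n → M, ∑ i, a i • p i = x := by
  constructor
  · intro hx
    induction hx using Submodule.smul_induction_on' with
    | smul r hr m _ =>
      obtain ⟨c, rfl⟩ := Ideal.mem_span_range_iff_exists_fun.1 hr
      refine ⟨fun i => c i • m, ?_⟩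
      simp only [Finset.sum_smul, mul_smul]
      exact Finset.sum_congr rfl fun i _ => smul_comm _ _ _
    | add x _ y _ hx hy =>
      obtain ⟨p, rfl⟩ := hx
      obtain ⟨q, rfl⟩ := hy
      exact ⟨p + q, by simp [Finset.sum_add_distrib]⟩
  · rintro ⟨p, rfl⟩
    exact Submodule.sum_mem _ fun i _ => Submodule.smul_mem_smul
      (Ideal.subset_span ⟨i, rfl⟩) trivial

/-- reduction to finitely generated ideals -/
lemma fg_red {R : Type u} [CommRing R] {K P : Type u} [AddCommGroup K] [Module R K]
    [AddCommGroup P] [Module R P] (i : K →ₗ[R] P)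
    (h : ∀ I : Ideal R, I.FG → ¬ I ≤ nilradical R →
      ∀ x : K, i x ∈ I • (⊤ : Submodule R P) → x ∈ I • (⊤ : Submodule R K))
    (I : Ideal R) (hI : ¬ I ≤ nilradical R) (x : K) (hx : i x ∈ I • (⊤ : Submodule R P)) :
    x ∈ I • (⊤ : Submodule R K) := by
  have key : ∀ y ∈ I • (⊤ : Submodule R P), ∃ J : Ideal R, J.FG ∧ J ≤ I ∧
      y ∈ J • (⊤ : Submodule R P) := by
    intro y hy
    induction hy using Submodule.smul_induction_on' with
    | smul r hr m _ =>
      exact ⟨Ideal.span {r}, ⟨{r}, by simp⟩, by simpa [Ideal.span_le] using hr,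
        Submodule.smul_mem_smul (Ideal.mem_span_singleton_self r) trivial⟩
    | add x _ y _ hx hy =>
      obtain ⟨J1, h1, l1, m1⟩ := hx
      obtain ⟨J2, h2, l2, m2⟩ := hy
      exact ⟨J1 ⊔ J2, Submodule.FG.sup h1 h2, sup_le l1 l2, Submodule.add_mem _
        (Submodule.smul_mono_left le_sup_left m1) (Submodule.smul_mono_left le_sup_right m2)⟩
  obtain ⟨J, hJ, hle, hm⟩ := key _ hx
  obtain ⟨s, hs, hsn⟩ := SetLike.not_le_iff_exists.1 hI
  have hle2 : J ⊔ Ideal.span {s} ≤ I := sup_le hle (by simpa [Ideal.span_le] using hs)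
  refine Submodule.smul_mono_left hle2 (h _ (Submodule.FG.sup hJ ⟨{s}, by simp⟩) ?_ x
    (Submodule.smul_mono_left le_sup_left hm))
  exact fun hh => hsn (hh (Ideal.mem_sup_right (Ideal.mem_span_singleton_self s)))

/-- equational form of `I ⊗ M → M` injective. -/
lemma phiFlat_iff {R : Type u} [CommRing R] (H : Type u) [AddCommGroup H] [Module R H] :
    IsPhiFlat R H ↔ ∀ (n : ℕ) (a : Fin n → R), ¬ Ideal.span (Set.range a) ≤ nilradical R →
      ∀ x : Fin n → H, ∑ i, a i • x i = 0 → Module.IsTrivialRelation a x := by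
  obtain ⟨P0, P1, P2, d2, d1, π, hP, hπ, h1, h2, hT, -⟩ := tor_res R H
  have hq : ∀ x, d1 x ∈ LinearMap.ker π := fun x => (h1 _).2 ⟨x, rfl⟩
  let q := d1.codRestrict (LinearMap.ker π) hq
  have hqs : Function.Surjective q := by
    rintro ⟨x, hx⟩
    obtain ⟨y, rfl⟩ := (h1 x).1 hx
    exact ⟨y, rfl⟩
  have hd : d1 = (LinearMap.ker π).subtype ∘ₗ q := rfl
  have hqe : Function.Exact d2 q := by
    intro x
    rw [← h2 x]
    exact Subtype.ext_iff
  have hT' : ∀ (T : Type u) [AddCommGroup T] [Module R T],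
        Subsingleton (((Tor (ModuleCat.{u} R) 1).obj (ModuleCat.of R T)).obj (ModuleCat.of R H)) ↔
          Function.Injective ((LinearMap.ker π).subtype.lTensor T) := by
    intro T _ _
    rw [hT, hd, exact_iff_inj _ _ _ hqs hqe]
  constructor
  · intro hF n a ha x hx
    have := (hT' _).1 (hF (R ⧸ Ideal.span (Set.range a)) (fun t => ⟨_, ha, fun r hr => by
      obtain ⟨s, rfl⟩ := Ideal.Quotient.mk_surjective t
      rw [Algebra.smul_def]
      change Ideal.Quotient.mk _ r * _ = 0
      rw [Ideal.Quotient.eq_zero_iff_mem.2 hr, zero_mul]⟩))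
    rw [quot_inj] at this
    choose p hp using fun i => hπ (x i)
    obtain ⟨k, hk⟩ := (mem_smul_fin a _).1 (this ⟨∑ i, a i • p i, by simp [hp, hx]⟩
      ((mem_smul_fin a _).2 ⟨p, rfl⟩))
    have hk' : ∑ i, a i • (p i - (k i : P0)) = 0 := by
      have := congrArg Subtype.val hk
      simp only [AddSubmonoidClass.coe_finsetSum, SetLike.val_smul] at this
      simp [smul_sub, this]
    obtain ⟨m, r, y, hy, hr⟩ := Module.Flat.isTrivialRelation_of_sum_smul_eq_zero hk'
    refine ⟨m, r, fun j => π (y j), fun i => ?_, hr⟩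
    have := congrArg π (hy i)
    rw [map_sub, hp, LinearMap.mem_ker.1 (k i).2, sub_zero] at this
    simpa using this
  · intro h T _ _ hTT
    rw [hT']
    refine tors_inj _ (fun I hI => ?_) T hTT
    rw [quot_inj]
    refine fg_red _ ?_ I hI
    intro J hJ hJn x hx
    obtain ⟨n, a, rfl⟩ := Submodule.fg_iff_exists_fin_generating_family.1 hJ
    obtain ⟨p, hp⟩ := (mem_smul_fin a _).1 hx
    obtain ⟨m, r, y, hy, hr⟩ := h n a hJn (fun i => π (p i)) (by
      have := congrArg π hp
      rw [Submodule.subtype_apply, LinearMap.mem_ker.1 x.2] at this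
      simpa using this)
    choose z hz using fun j => hπ (y j)
    refine (mem_smul_fin a _).2 ⟨fun i => ⟨p i - ∑ j, r i j • z j, by simp [hy, hz]⟩, ?_⟩
    apply Subtype.ext
    rw [Submodule.subtype_apply] at hp
    simp only [AddSubmonoidClass.coe_finsetSum, SetLike.val_smul, smul_sub, Finset.sum_sub_distrib,
      hp, sub_eq_self, Finset.smul_sum, smul_smul]
    rw [Finset.sum_comm]
    simp [← Finset.sum_smul, hr]

lemma ext_extend {R : Type u} [CommRing R] (I : Ideal R) (M : Type u) [AddCommGroup M] [Module R M]
    (h : Subsingleton (((Ext R (ModuleCat.{u} R) 1).obj (Opposite.op (ModuleCat.of R (R ⧸ I)))).obj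
      (ModuleCat.of R M))) (f : I →ₗ[R] M) : ∃ m : M, ∀ a : I, f a = (a : R) • m := by
  obtain ⟨P0, P1, P2, d2, d1, π, hP, hπ, h1, h2, -, hE⟩ := tor_res R (R ⧸ I)
  rw [hE] at h
  obtain ⟨σ, hσ⟩ := Module.projective_lifting_property I.mkQ π (Submodule.mkQ_surjective _)
  have hσ' : ∀ x, I.mkQ (σ x) = π x := fun x => LinearMap.congr_fun hσ x
  let τ : P1 →ₗ[R] I := (σ ∘ₗ d1).codRestrict I (fun x => by
    rw [← Submodule.Quotient.mk_eq_zero, ← Submodule.mkQ_apply, LinearMap.comp_apply, hσ']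
    exact (h1 _).2 ⟨x, rfl⟩)
  obtain ⟨k, hk⟩ := h (f ∘ₗ τ) (by
    ext x
    have : τ (d2 x) = 0 := Subtype.ext (by simp [τ, (h2 (d2 x)).2 ⟨x, rfl⟩])
    simp [this])
  obtain ⟨p, hp⟩ := hπ (I.mkQ 1)
  have hi : σ p - 1 ∈ I := by
    rw [← Submodule.Quotient.mk_eq_zero, ← Submodule.mkQ_apply, map_sub, hσ', hp, sub_self]
  refine ⟨k p - f ⟨_, hi⟩, fun a => ?_⟩
  obtain ⟨y, hy⟩ := (h1 ((a : R) • p)).1 (by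
    rw [map_smul, hp, ← map_smul, Submodule.mkQ_apply, Submodule.Quotient.mk_eq_zero]
    simp)
  have h3 := LinearMap.congr_fun hk y
  simp only [LinearMap.comp_apply, hy] at h3
  rw [smul_sub, ← map_smul, h3, ← map_smul, ← map_sub]
  congr 1
  apply Subtype.ext
  simp [τ, hy, mul_sub]

lemma inj_nonnilInj {R : Type u} [CommRing R] (M : Type u) [AddCommGroup M] [Module R M]
    [Module.Injective R M] : IsNonnilInjective R M := by
  intro T _ _ _
  obtain ⟨P0, P1, P2, d2, d1, π, hP, hπ, h1, h2, -, hE⟩ := tor_res R T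
  rw [hE]
  intro f hf
  have hk : LinearMap.ker d1 ≤ LinearMap.ker f := by
    intro x hx
    obtain ⟨y, rfl⟩ := (h2 x).1 hx
    exact LinearMap.congr_fun hf y
  obtain ⟨g, hg⟩ := Module.Injective.extension_property R M _ _
    ((LinearMap.ker d1).liftQ d1 le_rfl)
    (LinearMap.ker_eq_bot.1 (Submodule.ker_liftQ_eq_bot _ _ _ le_rfl))
    ((LinearMap.ker d1).liftQ f hk)
  refine ⟨g, ?_⟩
  ext x
  exact LinearMap.congr_fun hg (Submodule.Quotient.mk x)

/-- extension of maps vanishing on the kernel -/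
lemma inj_factor {R : Type u} [CommRing R] {A B E : Type u} [AddCommGroup A] [Module R A]
    [AddCommGroup B] [Module R B] [AddCommGroup E] [Module R E] [Module.Injective R E]
    (d : A →ₗ[R] B) (f : A →ₗ[R] E) (hk : LinearMap.ker d ≤ LinearMap.ker f) :
    ∃ g : B →ₗ[R] E, g ∘ₗ d = f := by
  obtain ⟨g, hg⟩ := Module.Injective.extension_property R E _ _
    ((LinearMap.ker d).liftQ d le_rfl)
    (LinearMap.ker_eq_bot.1 (Submodule.ker_liftQ_eq_bot _ _ _ le_rfl))
    ((LinearMap.ker d).liftQ f hk)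
  refine ⟨g, ?_⟩
  ext x
  exact LinearMap.congr_fun hg (Submodule.Quotient.mk x)

lemma quot_tors {R : Type u} [CommRing R] (I : Ideal R) (hI : ¬ I ≤ nilradical R) :
    IsPhiTorsion R (R ⧸ I) := fun t => ⟨_, hI, fun r hr => by
  obtain ⟨s, rfl⟩ := Ideal.Quotient.mk_surjective t
  rw [Algebra.smul_def]
  change Ideal.Quotient.mk _ r * _ = 0
  rw [Ideal.Quotient.eq_zero_iff_mem.2 hr, zero_mul]⟩

/-- the presentation map of a finitely generated ideal -/
lemma pres_map {R : Type u} [CommRing R] {n : ℕ} (a : Fin n → R) :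
    ∃ l : (Fin n → R) →ₗ[R] Ideal.span (Set.range a), Function.Surjective l ∧
      ∀ c, (l c : R) = ∑ i, c i * a i := by
  refine ⟨(Fintype.linearCombination R a).codRestrict (Ideal.span (Set.range a)) (fun c => ?_),
    ?_, ?_⟩
  · rw [Fintype.linearCombination_apply]
    exact Ideal.mem_span_range_iff_exists_fun.2 ⟨c, rfl⟩
  · rintro ⟨x, hx⟩
    obtain ⟨c, hc⟩ := Ideal.mem_span_range_iff_exists_fun.1 hx
    exact ⟨c, Subtype.ext (by simpa [Fintype.linearCombination_apply] using hc)⟩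
  · intro c
    simp [Fintype.linearCombination_apply]

lemma coherent_imp {R : Type u} [CommRing R] (hR : IsNonnilCoherent R)
    (M : Type u) [AddCommGroup M] [Module R M] (E : Type u) [AddCommGroup E] [Module R E]
    (hM : IsNonnilFPInjective R M) (hE : Module.Injective R E) : IsPhiFlat R (M →ₗ[R] E) := by
  rw [phiFlat_iff]
  intro n a ha x hx
  have hfg : (Ideal.span (Set.range a)).FG :=
    Submodule.fg_iff_exists_fin_generating_family.2 ⟨n, a, rfl⟩
  have hfp := hR _ hfg ha
  obtain ⟨l, hl, hla⟩ := pres_map a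
  obtain ⟨m, r, hr⟩ := Submodule.fg_iff_exists_fin_generating_family.1
    (Module.FinitePresentation.fg_ker l hl)
  have hrk : ∀ j, r j ∈ LinearMap.ker l := fun j => hr ▸ Submodule.subset_span ⟨j, rfl⟩
  have hquot : Module.FinitePresentation R (R ⧸ Ideal.span (Set.range a)) :=
    Module.finitePresentation_of_surjective (Ideal.span (Set.range a)).mkQ
      (Submodule.mkQ_surjective _) (by rw [Submodule.ker_mkQ]; exact hfg)
  have hext := ext_extend _ M (hM _ hquot (quot_tors _ ha))
  let φ : (Fin n → M) →ₗ[R] (Fin m → M) :=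
    LinearMap.pi fun j => ∑ i, r j i • LinearMap.proj i
  let F : (Fin n → M) →ₗ[R] E := ∑ i, x i ∘ₗ LinearMap.proj i
  obtain ⟨G, hG⟩ := inj_factor φ F (by
    intro v hv
    have hv' : ∀ j, ∑ i, r j i • v i = 0 := fun j => by
      have := congrFun (LinearMap.mem_ker.1 hv) j
      simpa [φ] using this
    let ψ : (Fin n → R) →ₗ[R] M := Fintype.linearCombination R v
    have hψ : LinearMap.ker l ≤ LinearMap.ker ψ := by
      rw [← hr, Submodule.span_le]
      rintro _ ⟨j, rfl⟩
      simpa [ψ, Fintype.linearCombination_apply] using hv' j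
    let h : Ideal.span (Set.range a) →ₗ[R] M :=
      (LinearMap.ker l).liftQ ψ hψ ∘ₗ (l.quotKerEquivOfSurjective hl).symm.toLinearMap
    have hh : ∀ c, h (l c) = ψ c := by
      intro c
      have : (l.quotKerEquivOfSurjective hl).symm (l c) = Submodule.Quotient.mk c := by
        rw [LinearEquiv.symm_apply_eq]; rfl
      simp [h, this]
    obtain ⟨w, hw⟩ := hext h
    have hvi : ∀ i, v i = a i • w := by
      intro i
      have h1 := hh (Pi.single i 1)
      have h2 := hw (l (Pi.single i 1))
      rw [h1, hla] at h2
      simpa [ψ, Pi.single_apply] using h2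
    rw [LinearMap.mem_ker]
    have := LinearMap.congr_fun hx w
    simpa [F, hvi] using this)
  refine ⟨m, fun i j => r j i, fun j => G ∘ₗ LinearMap.single R (fun _ => M) j, fun i => ?_,
    fun j => ?_⟩
  · ext w
    have := LinearMap.congr_fun hG (Pi.single i w)
    have hF : F (Pi.single i w) = x i w := by
      simp only [F, LinearMap.sum_apply, LinearMap.comp_apply, LinearMap.proj_apply]
      rw [Finset.sum_eq_single i]
      · simp
      · intro b _ hb; simp [hb]
      · simp
    have hφ : φ (Pi.single i w) = ∑ j, r j i • Pi.single j w := by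
      ext j
      simp [φ, Pi.single_apply]
    rw [LinearMap.comp_apply, hF, hφ] at this
    rw [← this]
    simp
  · have := congrArg Subtype.val (LinearMap.mem_ker.1 (hrk j))
    rw [hla] at this
    simpa [mul_comm] using this

lemma exists_cogen {R : Type u} [CommRing R] {A : Type u} [AddCommGroup A] [Module R A] (x : A)
    (hx : x ≠ 0) : ∃ ψ : A →ₗ[R] CharacterModule R, ψ x ≠ 0 := by
  obtain ⟨χ, hχ⟩ := CharacterModule.exists_character_apply_ne_zero_of_ne_zero hx
  let χ' : CharacterModule (TensorProduct R A R) :=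
    AddMonoidHom.comp χ (TensorProduct.rid R A).toLinearMap.toAddMonoidHom
  refine ⟨CharacterModule.curry χ', fun h => hχ ?_⟩
  have : CharacterModule.curry χ' x (1 : R) = 0 := by rw [h]; rfl
  have h2 : CharacterModule.curry χ' x (1 : R) = χ ((1 : R) • x) := rfl
  rw [h2, one_smul] at this
  exact this

lemma imp_coherent_aux {R : Type u} [CommRing R] (E : Type u) [AddCommGroup E] [Module R E]
    [Module.Injective R E]
    (hco : ∀ (A : Type u) [AddCommGroup A] [Module R A] (x : A), x ≠ 0 → ∃ ψ : A →ₗ[R] E, ψ x ≠ 0)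
    {n : ℕ} (a : Fin n → R) (J : Submodule R (Fin n → R))
    (hJ : ∀ c, c ∈ J ↔ ∑ i, c i * a i = 0)
    (H : ∀ x : Fin n → ((J → E) →ₗ[R] E), ∑ i, a i • x i = 0 → Module.IsTrivialRelation a x) :
    J.FG := by
  classical
  let α : (J → E) →ₗ[R] (Fin n → J → E) := LinearMap.pi fun i => a i • LinearMap.id
  let κ : (Fin n → (J →₀ E)) →ₗ[R] (Fin n → J → E) :=
    LinearMap.pi fun i => Finsupp.lcoeFun ∘ₗ LinearMap.proj i
  let f0 : (Fin n → (J →₀ E)) →ₗ[R] E :=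
    ∑ i, (Finsupp.lsum R (fun c : J => c.1 i • (LinearMap.id : E →ₗ[R] E))) ∘ₗ LinearMap.proj i
  have hf0 : ∀ v, f0 v = ∑ i, (v i).sum fun c e => c.1 i • e := by
    intro v; simp [f0]; rfl
  obtain ⟨g, hg⟩ := inj_factor ((LinearMap.range α).mkQ ∘ₗ κ) f0 (by
    intro v hv
    rw [LinearMap.mem_ker, LinearMap.comp_apply, Submodule.mkQ_apply,
      Submodule.Quotient.mk_eq_zero] at hv
    obtain ⟨e, he⟩ := hv
    have he' : ∀ i c, v i c = a i • e c := fun i c => (congrFun (congrFun he i) c).symm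
    rw [LinearMap.mem_ker, hf0]
    have : ∀ i, ((v i).sum fun c e => c.1 i • e) =
        ∑ c ∈ Finset.univ.biUnion (fun i => (v i).support), c.1 i • v i c := fun i =>
      Finsupp.sum_of_support_subset _
        (Finset.subset_biUnion_of_mem (fun i => (v i).support) (Finset.mem_univ i)) _ (by simp)
    simp only [this, he', smul_smul]
    rw [Finset.sum_comm]
    refine Finset.sum_eq_zero fun c _ => ?_
    rw [← Finset.sum_smul, (hJ c.1).1 c.2, zero_smul])
  let f : Fin n → ((J → E) →ₗ[R] E) := fun i =>
    g ∘ₗ (LinearMap.range α).mkQ ∘ₗ LinearMap.single R (fun _ => J → E) i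
  have hfa : ∑ i, a i • f i = 0 := by
    refine LinearMap.ext fun w => ?_
    have h1 : (LinearMap.range α).mkQ (α w) = 0 := by
      rw [Submodule.mkQ_apply, Submodule.Quotient.mk_eq_zero]; exact ⟨w, rfl⟩
    have h2 : α w = ∑ i, a i • (Pi.single i w : Fin n → J → E) := by
      funext i
      simp [α, Finset.sum_apply, Pi.single_apply]
    have h3 : (∑ i, a i • f i) w = g ((LinearMap.range α).mkQ (α w)) := by
      rw [h2]
      simp only [map_sum, map_smul, LinearMap.sum_apply, LinearMap.smul_apply]
      rfl
    rw [h3, h1, map_zero]; rfl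
  obtain ⟨m, r, y, hy, hr⟩ := H f hfa
  refine Submodule.fg_iff_exists_fin_generating_family.2 ⟨m, fun j i => r i j, le_antisymm ?_ ?_⟩
  · rw [Submodule.span_le]
    rintro _ ⟨j, rfl⟩
    refine (hJ _).2 ?_
    simpa [mul_comm] using hr j
  · intro c hc
    by_contra hcs
    set S := Submodule.span R (Set.range fun (j : Fin m) (i : Fin n) => r i j) with hS
    obtain ⟨ψ, hψ⟩ := hco _ (S.mkQ c) (fun h => hcs ((Submodule.Quotient.mk_eq_zero _).1 h))
    apply hψ
    let e : Fin n → E := fun i => ψ (S.mkQ (Pi.single i 1))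
    have hc1 : ∀ d : Fin n → R, ψ (S.mkQ d) = ∑ i, d i • e i := by
      intro d
      simp only [e, ← map_smul, ← map_sum]
      congr 2
      funext i
      simp [Finset.sum_apply, Pi.single_apply]
    have hre : ∀ j, ∑ i, r i j • e i = 0 := by
      intro j
      rw [← hc1 (fun i => r i j)]
      have : S.mkQ (fun i => r i j) = 0 :=
        (Submodule.Quotient.mk_eq_zero _).2 (Submodule.subset_span ⟨j, rfl⟩)
      rw [this, map_zero]
    have hce : ∀ i (z : E), c i • z = ∑ j, r i j • y j (Pi.single (⟨c, hc⟩ : J) z) := by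
      intro i z
      have h1 := LinearMap.congr_fun (hy i) (Pi.single (⟨c, hc⟩ : J) z)
      have h2 := LinearMap.congr_fun hg (Pi.single i (Finsupp.single (⟨c, hc⟩ : J) z))
      have h3 : κ (Pi.single i (Finsupp.single (⟨c, hc⟩ : J) z)) =
          Pi.single i (Pi.single (⟨c, hc⟩ : J) z) := by
        funext k
        by_cases hk : k = i
        · subst hk
          funext d
          simp [κ, Finsupp.single_apply, Pi.single_apply, eq_comm]
        · funext d
          simp [κ, hk]
      have h4 : f0 (Pi.single i (Finsupp.single (⟨c, hc⟩ : J) z)) = c i • z := by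
        rw [hf0, Finset.sum_eq_single i]
        · simp
        · intro b _ hb; simp [hb]
        · simp
      rw [LinearMap.comp_apply, LinearMap.comp_apply, h3, h4] at h2
      rw [← h2]
      refine Eq.trans ?_ (h1.trans (by simp))
      rfl
    rw [hc1]
    simp only [hce]
    rw [Finset.sum_comm]
    refine Finset.sum_eq_zero fun j _ => ?_
    have : ∑ i, r i j • y j (Pi.single (⟨c, hc⟩ : J) (e i)) =
        y j (Pi.single (⟨c, hc⟩ : J) (∑ i, r i j • e i)) := by
      have h5 : ∀ w : E, y j (Pi.single (⟨c, hc⟩ : J) w) =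
        (y j ∘ₗ LinearMap.single R (fun _ => E) (⟨c, hc⟩ : J)) w := fun w => rfl
      simp only [h5, map_sum, map_smul]
    rw [this, hre, Pi.single_zero, map_zero]

lemma imp_coherent {R : Type u} [CommRing R]
    (H : ∀ (M : Type u) [AddCommGroup M] [Module R M]
        (E : Type u) [AddCommGroup E] [Module R E],
        IsNonnilInjective R M → Module.Injective R E → IsPhiFlat R (M →ₗ[R] E)) :
    IsNonnilCoherent R := by
  intro I hI hn
  obtain ⟨n, a, rfl⟩ := Submodule.fg_iff_exists_fin_generating_family.1 hI
  obtain ⟨l, hl, hla⟩ := pres_map a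
  refine Module.finitePresentation_of_free_of_surjective l hl ?_
  have hEinj : Module.Injective R (CharacterModule R) :=
    Module.Flat.iff_characterModule_injective.1 inferInstance
  refine imp_coherent_aux (CharacterModule R) (fun A _ _ x hx => exists_cogen x hx) a _ ?_ ?_
  · intro c
    rw [LinearMap.mem_ker, ← hla]
    exact Subtype.ext_iff
  · exact (phiFlat_iff _).1 (H _ _ (inj_nonnilInj _) hEinj) n a hn

/-- For a φ-ring `R` the following are equivalent: (1) `R` is
nonnil-coherent; (2) `Hom_R(M,E)` is φ-flat for every nonnil-FP-injective `M` and
injective `E`; (3) `Hom_R(M,E)` is φ-flat for every nonnil-injective `M` and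
injective `E`. -/
theorem nonnilCoherent_iff_hom_phiFlat (R : Type u) [CommRing R] (hR : IsPhiRing R) :
    (IsNonnilCoherent R ↔
      ∀ (M : Type u) [AddCommGroup M] [Module R M]
        (E : Type u) [AddCommGroup E] [Module R E],
        IsNonnilFPInjective R M → Module.Injective R E → IsPhiFlat R (M →ₗ[R] E)) ∧
    (IsNonnilCoherent R ↔
      ∀ (M : Type u) [AddCommGroup M] [Module R M]
        (E : Type u) [AddCommGroup E] [Module R E],
        IsNonnilInjective R M → Module.Injective R E → IsPhiFlat R (M →ₗ[R] E)) := by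
  have h12 : IsNonnilCoherent R → ∀ (M : Type u) [AddCommGroup M] [Module R M]
        (E : Type u) [AddCommGroup E] [Module R E],
        IsNonnilFPInjective R M → Module.Injective R E → IsPhiFlat R (M →ₗ[R] E) :=
    fun h M _ _ E _ _ hM hE => coherent_imp h M E hM hE
  have hI : ∀ (M : Type u) [AddCommGroup M] [Module R M], IsNonnilInjective R M →
      IsNonnilFPInjective R M := fun M _ _ h T _ _ _ hT => h T hT
  refine ⟨⟨h12, fun h => imp_coherent fun M _ _ E _ _ hM hE => h M E (hI M hM) hE⟩,
    ⟨fun h M _ _ E _ _ hM hE => h12 h M E (hI M hM) hE, fun h => imp_coherent h⟩⟩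
end

section
/- Let R be a φ-IF ring (a φ-ring in which every nonnil-injective R-module is φ-flat). Then R is nonnil-coherent. -/
open CategoryTheory

universe u

open TensorProduct in
lemma chase_aux {R : Type u} [CommRing R] {F0 F1 F2 M G : Type u} [AddCommGroup F0] [AddCommGroup F1]
    [AddCommGroup F2] [AddCommGroup M] [AddCommGroup G] [Module R F0] [Module R F1]
    [Module R F2] [Module R M] [Module R G] (d2 : F2 →ₗ[R] F1) (d1 : F1 →ₗ[R] F0) (p : F0 →ₗ[R] M)
    (hp : Function.Surjective p) (h1 : Function.Exact d1 p) (hd : d1 ∘ₗ d2 = 0)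
    [Module.Flat R F0] (L : Submodule R G)
    (hT : Function.Exact (d2.lTensor (G ⧸ L)) (d1.lTensor (G ⧸ L))) :
    Function.Injective (L.subtype.rTensor M) := by
  rw [injective_iff_map_eq_zero]
  intro x hx
  obtain ⟨y, rfl⟩ := LinearMap.lTensor_surjective L hp x
  have e1 : p.lTensor G (L.subtype.rTensor F0 y) = 0 := by
    rw [← hx, ← LinearMap.comp_apply, ← LinearMap.comp_apply, LinearMap.lTensor_comp_rTensor,
      LinearMap.rTensor_comp_lTensor]
  obtain ⟨z, hz⟩ := (lTensor_exact G h1 hp _).1 e1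
  have hLq : Function.Exact L.subtype L.mkQ := by
    rw [LinearMap.exact_iff]; simp
  have e2 : d1.lTensor (G ⧸ L) (L.mkQ.rTensor F1 z) = 0 := by
    have : L.mkQ.rTensor F0 (d1.lTensor G z) = 0 := by
      rw [hz]
      exact (rTensor_exact F0 hLq L.mkQ_surjective _).2 ⟨y, rfl⟩
    rw [← this, ← LinearMap.comp_apply, ← LinearMap.comp_apply, LinearMap.lTensor_comp_rTensor,
      LinearMap.rTensor_comp_lTensor]
  obtain ⟨w, hw⟩ := (hT _).1 e2
  obtain ⟨w, rfl⟩ := LinearMap.rTensor_surjective F2 L.mkQ_surjective w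
  have e3 : L.mkQ.rTensor F1 (z - d2.lTensor G w) = 0 := by
    rw [map_sub, ← hw, ← LinearMap.comp_apply, ← LinearMap.comp_apply,
      LinearMap.lTensor_comp_rTensor, LinearMap.rTensor_comp_lTensor, sub_self]
  obtain ⟨v, hv⟩ := (rTensor_exact F1 hLq L.mkQ_surjective _).1 e3
  have e4 : d1.lTensor L v = y := by
    apply Module.Flat.rTensor_preserves_injective_linearMap (M := F0) L.subtype L.subtype_injective
    have : L.subtype.rTensor F0 (d1.lTensor L v) = d1.lTensor G (L.subtype.rTensor F1 v) := by
      rw [← LinearMap.comp_apply, ← LinearMap.comp_apply,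
        LinearMap.lTensor_comp_rTensor, LinearMap.rTensor_comp_lTensor]
    rw [this, hv, map_sub, hz, ← LinearMap.comp_apply, ← LinearMap.lTensor_comp, hd]
    simp
  rw [← e4, ← LinearMap.comp_apply, ← LinearMap.lTensor_comp, h1.linearMap_comp_eq_zero]
  simp

lemma tor_aux {R : Type u} [CommRing R] {M G : Type u} [AddCommGroup M] [AddCommGroup G]
    [Module R M] [Module R G] (L : Submodule R G)
    (h : Subsingleton (((Tor (ModuleCat.{u} R) 1).obj (ModuleCat.of R (G ⧸ L))).obj
      (ModuleCat.of R M))) :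
    Function.Injective (L.subtype.rTensor M) := by
  let P := ProjectiveResolution.of (ModuleCat.of R M)
  have hz := (ModuleCat.isZero_of_iff_subsingleton (R := R)).2 h
  have hz2 := hz.of_iso (P.isoLeftDerivedObj
    ((MonoidalCategory.tensoringLeft (ModuleCat.{u} R)).obj (ModuleCat.of R (G ⧸ L))) 1).symm
  have hz3 := (HomologicalComplex.exactAt_iff_isZero_homology _ _).2 hz2
  rw [HomologicalComplex.exactAt_iff' _ 2 1 0 (by simp) (by simp)] at hz3
  have hex := (ShortComplex.ShortExact.moduleCat_exact_iff_function_exact _).1 hz3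
  have hp0 : Module.Projective R (P.complex.X 0) :=
    (IsProjective.iff_projective _).2 (inferInstance : Projective (P.complex.X 0))
  have h0 := (ShortComplex.ShortExact.moduleCat_exact_iff_function_exact _).1 P.exact₀
  have hs : Function.Surjective (P.π.f 0).hom := (ModuleCat.epi_iff_surjective _).1 inferInstance
  have hd : (P.complex.d 1 0).hom ∘ₗ (P.complex.d 2 1).hom = 0 := by
    rw [← ModuleCat.hom_comp, P.complex.d_comp_d]; rfl
  exact chase_aux (P.complex.d 2 1).hom (P.complex.d 1 0).hom (P.π.f 0).hom hs h0 hd L hex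

lemma ext_aux_s10 {R : Type u} [CommRing R] {M T : Type u} [AddCommGroup M] [AddCommGroup T]
    [Module R M] [Module R T]
    (h : ∀ (G : Type u) [AddCommGroup G] [Module R G] (L : Submodule R G),
      Nonempty ((G ⧸ L) ≃ₗ[R] T) → ∀ f : L →ₗ[R] M, ∃ g : G →ₗ[R] M, g ∘ₗ L.subtype = f) :
    Subsingleton (((Ext R (ModuleCat.{u} R) 1).obj (Opposite.op (ModuleCat.of R T))).obj
      (ModuleCat.of R M)) := by
  let P := ProjectiveResolution.of (ModuleCat.of R T)
  apply ModuleCat.subsingleton_of_isZero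
  refine Limits.IsZero.of_iso ?_ (P.isoExt (R := R) 1 (ModuleCat.of R M))
  rw [← HomologicalComplex.exactAt_iff_isZero_homology,
    HomologicalComplex.exactAt_iff' _ 0 1 2 (by simp) (by simp)]
  rw [ShortComplex.moduleCat_exact_iff]
  intro (f : P.complex.X 1 ⟶ ModuleCat.of R M) hf
  have hf' : P.complex.d 2 1 ≫ f = 0 := hf
  have h0 := (ShortComplex.ShortExact.moduleCat_exact_iff_function_exact _).1 P.exact₀
  have h1 := (ShortComplex.ShortExact.moduleCat_exact_iff_function_exact _).1 (P.exact_succ 0)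
  have hs : Function.Surjective (P.π.f 0).hom := (ModuleCat.epi_iff_surjective _).1 inferInstance
  let d1 := (P.complex.d 1 0).hom
  let d2 := (P.complex.d 2 1).hom
  have h0' : Function.Exact d1 (P.π.f 0).hom := h0
  have h1' : Function.Exact d2 d1 := h1
  have hk : LinearMap.ker d1 ≤ LinearMap.ker f.hom := by
    intro x hx
    obtain ⟨y, rfl⟩ := (h1' x).1 hx
    exact congrArg (fun t => t.hom y) hf'
  obtain ⟨g, hg⟩ := h (P.complex.X 0) (LinearMap.range d1)
    ⟨h0'.linearEquivOfSurjective hs⟩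
    ((LinearMap.ker d1).liftQ f.hom hk ∘ₗ d1.quotKerEquivRange.symm.toLinearMap)
  refine ⟨ModuleCat.ofHom g, ?_⟩
  change P.complex.d 1 0 ≫ ModuleCat.ofHom g = f
  ext x
  have := LinearMap.congr_fun hg ⟨d1 x, x, rfl⟩
  change g (d1 x) = _ at this
  change g (d1 x) = _
  rw [this]
  have e : d1.quotKerEquivRange.symm ⟨d1 x, x, rfl⟩ = (LinearMap.ker d1).mkQ x := by
    rw [LinearEquiv.symm_apply_eq]; rfl
  simp only [LinearMap.comp_apply, LinearEquiv.coe_coe]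
  erw [e]
  rfl

lemma IsPhiTorsion.congr_aux {R : Type u} [CommRing R] {T T' : Type u} [AddCommGroup T]
    [AddCommGroup T'] [Module R T] [Module R T'] (e : T ≃ₗ[R] T') (h : IsPhiTorsion R T') :
    IsPhiTorsion R T := by
  intro t
  obtain ⟨I, hI, hI'⟩ := h (e t)
  refine ⟨I, hI, fun a ha => e.injective ?_⟩
  rw [map_smul, hI' a ha, map_zero]

open TensorProduct in
lemma fp_aux {R : Type u} [CommRing R] (I : Ideal R) (hI : I.FG)
    (h : ∀ X : Type u, Function.Injective
      (I.subtype.rTensor (X → CharacterModule (CharacterModule R)))) :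
    Module.FinitePresentation R I := by
  obtain ⟨n, a, ha⟩ := Submodule.fg_iff_exists_fin_generating_family.1 hI
  have haI : ∀ i, a i ∈ I := fun i => ha ▸ Submodule.subset_span ⟨i, rfl⟩
  let m : Fin n → I := fun i => ⟨a i, haI i⟩
  have hm : Submodule.span R (Set.range m) = ⊤ := by
    apply Submodule.map_injective_of_injective I.subtype_injective
    rw [Submodule.map_span, ← Set.range_comp]
    simpa [m, Function.comp_def] using ha
  let l : (Fin n → R) →ₗ[R] I := Fintype.linearCombination R m
  have hl : Function.Surjective l := by
    rw [← LinearMap.range_eq_top, Fintype.range_linearCombination, hm]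
  refine Module.finitePresentation_of_surjective l hl ?_
  let K := LinearMap.ker l
  have hK : ∀ k : K, ∑ i, k.1 i * a i = 0 := by
    intro k
    have h7 : l k.1 = 0 := k.2
    have h8 : I.subtype (l k.1) = 0 := by rw [h7, map_zero]
    rw [Fintype.linearCombination_apply, map_sum] at h8
    exact h8
  let ev : R → CharacterModule (CharacterModule R) := fun r =>
    { toFun := fun c => c r, map_zero' := rfl, map_add' := fun _ _ => rfl }
  have hsum : ∀ (A : Type u) [AddCommGroup A] (k : ℕ) (f : Fin k → CharacterModule A) (t : A),
      (∑ i, f i) t = ∑ i, f i t := by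
    intro A _ k f t
    exact map_sum (AddMonoidHom.eval t : (A →+ AddCircle (1 : ℚ)) →+ AddCircle (1 : ℚ)) f _
  have hev : ∀ r c, ev r c = c r := fun _ _ => rfl
  let x : Fin n → (K → CharacterModule (CharacterModule R)) := fun i k => ev (k.1 i)
  have hx : ∑ i, a i • x i = 0 := by
    ext k c
    have h2 : ∑ i, c (k.1 i * a i) = 0 := by rw [← map_sum, hK, map_zero]
    rw [Finset.sum_apply, hsum]
    refine Eq.trans (Finset.sum_congr rfl fun i _ => ?_) h2
    change c (a i • k.1 i) = _
    rw [smul_eq_mul, mul_comm]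
  have hs : ∑ i, m i ⊗ₜ[R] x i = 0 := by
    apply h K
    rw [map_sum, map_zero]
    simp only [LinearMap.rTensor_tmul]
    apply (TensorProduct.lid R _).injective
    rw [map_sum, map_zero, ← hx]
    simp [m]
  obtain ⟨q, b, y, hy, hb⟩ := TensorProduct.vanishesTrivially_of_sum_tmul_eq_zero R hm hs
  let B : Fin q → Fin n → R := fun j i => b i j
  have hKB : LinearMap.ker l = Submodule.span R (Set.range B) := by
    apply le_antisymm
    · intro k hk
      by_contra hkn
      have hne : (Submodule.span R (Set.range B)).mkQ k ≠ 0 := by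
        rwa [Ne, Submodule.mkQ_apply, Submodule.Quotient.mk_eq_zero]
      obtain ⟨c, hc⟩ := CharacterModule.exists_character_apply_ne_zero_of_ne_zero hne
      apply hc
      let c' : CharacterModule (Fin n → R) :=
        CharacterModule.dual (Submodule.span R (Set.range B)).mkQ c
      let ci : Fin n → CharacterModule R := fun i =>
        CharacterModule.dual (LinearMap.single R (fun _ => R) i) c'
      have hci : ∀ v : Fin n → R, c' v = ∑ i, ci i (v i) := by
        intro v
        conv_lhs => rw [← Finset.univ_sum_single v, map_sum]
        rfl
      have hcB : ∀ j, ∑ i, b i j • ci i = 0 := by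
        intro j
        ext r
        rw [hsum]
        have h3 : c' (r • B j) = 0 := by
          have h4 : (Submodule.span R (Set.range B)).mkQ (r • B j) = 0 := by
            rw [Submodule.mkQ_apply, Submodule.Quotient.mk_eq_zero]
            exact Submodule.smul_mem _ _ (Submodule.subset_span ⟨j, rfl⟩)
          exact (congrArg c h4).trans (map_zero c)
        rw [hci] at h3
        refine Eq.trans (Finset.sum_congr rfl fun i _ => ?_) h3
        change ci i (b i j • r) = ci i (r • b i j)
        rw [smul_eq_mul, smul_eq_mul, mul_comm]
      change c' k = 0
      rw [hci]
      have h5 : ∀ i, ci i (k i) = ∑ j, y j ⟨k, hk⟩ (b i j • ci i) := by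
        intro i
        have h6 := DFunLike.congr_fun (congrFun (hy i) ⟨k, hk⟩) (ci i)
        rw [Finset.sum_apply, hsum] at h6
        exact h6
      rw [Finset.sum_congr rfl fun i _ => h5 i, Finset.sum_comm]
      refine Finset.sum_eq_zero fun j _ => ?_
      rw [← map_sum, hcB, map_zero]
    · rw [Submodule.span_le]
      rintro _ ⟨j, rfl⟩
      change l _ = 0
      rw [Fintype.linearCombination_apply]
      exact hb j
  rw [hKB]
  exact Submodule.fg_span (Set.finite_range B)

/-- A φ-IF ring (a φ-ring in which every nonnil-injective module is
φ-flat) is nonnil-coherent. -/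
theorem nonnilCoherent_of_phiIF (R : Type u) [CommRing R] (hR : IsPhiRing R)
    (hIF : ∀ (M : Type u) [AddCommGroup M] [Module R M],
      IsNonnilInjective R M → IsPhiFlat R M) :
    IsNonnilCoherent R := by
  intro I hI hnn
  have hE : IsNonnilInjective R (CharacterModule R) := by
    intro T _ _ hT
    apply ext_aux_s10
    intro G _ _ L _ f
    have : Module.Injective R (CharacterModule R) :=
      Module.Flat.iff_characterModule_injective.1 inferInstance
    exact Module.Injective.extension_property R _ _ _ L.subtype L.subtype_injective f
  apply fp_aux I hI
  intro X
  have hP : IsNonnilInjective R (X → CharacterModule (CharacterModule R)) := by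
    intro T _ _ hT
    apply ext_aux_s10
    rintro G _ _ L ⟨e⟩ f
    have hinj := tor_aux L (hIF _ hE (G ⧸ L) (hT.congr_aux e))
    have hsurj := rTensor_injective_iff_lcomp_surjective.1 hinj
    choose g hg using fun k => hsurj (LinearMap.proj k ∘ₗ f)
    refine ⟨LinearMap.pi g, ?_⟩
    ext1 t
    funext k
    exact LinearMap.congr_fun (hg k) t
  apply tor_aux I
  apply hIF _ hP
  intro t
  obtain ⟨r, rfl⟩ := Ideal.Quotient.mk_surjective t
  refine ⟨I, hnn, fun s hs => ?_⟩
  exact Ideal.Quotient.eq_zero_iff_mem.2 (I.mul_mem_right r hs)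
end
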